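/- arXiv:2506.05528 — 9 statements merged into one kernel-verified Lean document; each statement's English description precedes it below -/
import Mathlib

section
/- Let n be a positive integer, let σ, π, ρ ∈ S_n and i ∈ {1,…,n−1} be such that σ = πρ and R(σ·s_i) = R(σ). Then there exists a unique factorization σ·s_i = π′ρ′ such that exactly one of the following holds: (1) π′ = π, ρ⁻¹ρ′ is a simple transposition, and R(ρ′) = R(ρ); or (2) ρ′ = ρ, π⁻¹π′ is a simple transposition, and R(π′) = R(π). -/
/-!
Indexing convention: positions of a permutation `σ ∈ S_n` are `0,…,n-1` (the element
`⟨i,_⟩ : Fin n` corresponds to the paper's 1-based position `i+1`).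
-/

/-- The recoil set of a permutation: the descent set of its inverse. -/
def recoilSet {n : ℕ} (σ : Equiv.Perm (Fin n)) : Finset (Fin n) :=
  Finset.univ.filter fun i => ∃ h : (i : ℕ) + 1 < n, σ⁻¹ ⟨(i : ℕ) + 1, h⟩ < σ⁻¹ i

/-- A simple transposition `s_j = (j, j+1)`. -/
def IsSimpleTransposition {n : ℕ} (τ : Equiv.Perm (Fin n)) : Prop :=
  ∃ (j : ℕ) (h : j + 1 < n), τ = Equiv.swap ⟨j, by omega⟩ ⟨j + 1, h⟩

def AdjF {n : ℕ} (a b : Fin n) : Prop := a.val + 1 = b.val ∨ b.val + 1 = a.val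

lemma swap_lt_aux {n : ℕ} {a b x y : Fin n} (h : AdjF a b) (hxy : x ≠ y)
    (h1 : ¬ (x = a ∧ y = b)) (h2 : ¬ (x = b ∧ y = a)) :
    Equiv.swap a b x < Equiv.swap a b y ↔ x < y := by
  unfold AdjF at h
  rw [Equiv.swap_apply_def, Equiv.swap_apply_def]
  simp only [Fin.ext_iff, ne_eq] at *
  split_ifs <;> simp only [Fin.lt_def] <;> omega

lemma recoil_iff {n : ℕ} (σ : Equiv.Perm (Fin n)) {a b : Fin n} (h : AdjF a b) :
    recoilSet (σ * Equiv.swap a b) = recoilSet σ ↔ ¬ AdjF (σ a) (σ b) := by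
  constructor
  · intro he hadj
    have key : ∀ (c d : Fin n), AdjF c d → (σ c).val + 1 = (σ d).val →
        recoilSet (σ * Equiv.swap c d) = recoilSet σ → False := by
      intro c d hcd h1 he
      have hlt : (σ c).val + 1 < n := by rw [h1]; exact (σ d).isLt
      have e : (⟨(σ c).val + 1, hlt⟩ : Fin n) = σ d := Fin.ext h1
      have hinv : ∀ x, σ⁻¹ (σ x) = x := fun x => σ.symm_apply_apply x
      have := congrArg (fun S => σ c ∈ S) he
      simp only [recoilSet, Finset.mem_filter, Finset.mem_univ, true_and, mul_inv_rev,
        Equiv.swap_inv, Equiv.Perm.mul_apply, e, hinv,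
        Equiv.swap_apply_left, Equiv.swap_apply_right, exists_prop, hlt] at this
      unfold AdjF at hcd
      simp only [Fin.lt_def, eq_iff_iff] at this
      omega
    rcases hadj with h1 | h1
    · exact key a b h h1 he
    · rw [Equiv.swap_comm] at he
      exact key b a h.symm h1 he
  · intro hn
    ext k
    simp only [recoilSet, Finset.mem_filter, Finset.mem_univ, true_and, mul_inv_rev,
        Equiv.swap_inv, Equiv.Perm.mul_apply]
    refine exists_congr fun hk => swap_lt_aux h ?_ ?_ ?_
    · intro e
      have := σ⁻¹.injective e
      simp [Fin.ext_iff] at this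
    · rintro ⟨e1, e2⟩
      rw [Equiv.Perm.inv_eq_iff_eq] at e1 e2
      exact hn (Or.inr (by rw [← e1, ← e2]))
    · rintro ⟨e1, e2⟩
      rw [Equiv.Perm.inv_eq_iff_eq] at e1 e2
      exact hn (Or.inl (by rw [← e1, ← e2]))

lemma simple_of_adj {n : ℕ} {a b : Fin n} (h : AdjF a b) :
    IsSimpleTransposition (Equiv.swap a b) := by
  rcases h with h | h
  · refine ⟨a, by omega, ?_⟩
    congr 1
    exact Fin.ext h.symm
  · refine ⟨b, by omega, ?_⟩
    rw [Equiv.swap_comm]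
    congr 1
    exact Fin.ext h.symm

lemma adj_of_simple {n : ℕ} {a b : Fin n} (hab : a ≠ b)
    (h : IsSimpleTransposition (Equiv.swap a b)) : AdjF a b := by
  obtain ⟨j, hj, e⟩ := h
  have e1 := congrArg (fun f => f a) e
  simp only [Equiv.swap_apply_left] at e1
  rw [Equiv.swap_apply_def] at e1
  unfold AdjF
  split_ifs at e1 with h1 h2
  · left; rw [e1, h1]
  · right; rw [e1, h2]
  · exact absurd e1.symm hab

/-- If `σ = πρ` and `R(σ·s_i) = R(σ)` then there is a unique factorization `σ·s_i = π′ρ′`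
for which exactly one of the two alternatives of Proposition 3 holds. -/
theorem statement1 (n : ℕ) (hn : 0 < n) (σ π ρ : Equiv.Perm (Fin n)) (i : ℕ) (hi : i + 1 < n)
    (hfac : σ = π * ρ)
    (hrec : recoilSet (σ * Equiv.swap (⟨i, by omega⟩ : Fin n) ⟨i + 1, hi⟩) = recoilSet σ) :
    ∃! pr : Equiv.Perm (Fin n) × Equiv.Perm (Fin n),
      pr.1 * pr.2 = σ * Equiv.swap (⟨i, by omega⟩ : Fin n) ⟨i + 1, hi⟩ ∧
      Xor'
        (pr.1 = π ∧ IsSimpleTransposition (ρ⁻¹ * pr.2) ∧ recoilSet pr.2 = recoilSet ρ)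
        (pr.2 = ρ ∧ IsSimpleTransposition (π⁻¹ * pr.1) ∧ recoilSet pr.1 = recoilSet π) := by
  have hA : AdjF (⟨i, by omega⟩ : Fin n) ⟨i + 1, hi⟩ := Or.inl rfl
  revert hrec
  generalize (⟨i, by omega⟩ : Fin n) = a at *
  generalize (⟨i + 1, hi⟩ : Fin n) = b at *
  intro hrec
  have hab : a ≠ b := by
    rintro rfl
    unfold AdjF at hA
    omega
  have hs1 : Equiv.swap a b ≠ 1 := by
    rw [Ne, Equiv.swap_eq_one_iff]; exact hab
  subst hfac
  rw [recoil_iff _ hA] at hrec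
  have hconj : Equiv.swap (ρ a) (ρ b) = ρ * Equiv.swap a b * ρ⁻¹ := by
    rw [Equiv.swap_apply_apply]
  have hρ : ρ a ≠ ρ b := fun h => hab (ρ.injective h)
  have f1 : ∀ p q : Equiv.Perm (Fin n), p * q = π * ρ * Equiv.swap a b → p = π →
      q = ρ * Equiv.swap a b := by
    rintro p q h rfl
    rw [mul_assoc] at h
    exact mul_left_cancel h
  have f2 : ∀ p q : Equiv.Perm (Fin n), p * q = π * ρ * Equiv.swap a b → q = ρ →
      p = π * Equiv.swap (ρ a) (ρ b) := by
    rintro p q h rfl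
    rw [hconj, eq_comm, ← mul_assoc, ← mul_assoc, ← h]
    simp
  by_cases hc : AdjF (ρ a) (ρ b)
  · refine ⟨(π * Equiv.swap (ρ a) (ρ b), ρ), ⟨?_, Or.inr ⟨⟨rfl, ?_, ?_⟩, ?_⟩⟩, ?_⟩
    · simp [hconj, mul_assoc]
    · simpa using simple_of_adj hc
    · exact (recoil_iff π hc).2 hrec
    · rintro ⟨h, -⟩
      simp only [mul_eq_left, Equiv.swap_eq_one_iff] at h
      exact hρ h
    · rintro ⟨p, q⟩ ⟨h, ⟨⟨h1, h2, h3⟩, -⟩ | ⟨⟨h1, h2, h3⟩, -⟩⟩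
      · have := f1 p q h h1
        simp only at h3
        rw [this, recoil_iff _ hA] at h3
        exact absurd hc h3
      · exact Prod.ext (f2 p q h h1) h1
  · refine ⟨(π, ρ * Equiv.swap a b), ⟨?_, Or.inl ⟨⟨rfl, ?_, ?_⟩, ?_⟩⟩, ?_⟩
    · simp [mul_assoc]
    · simpa using simple_of_adj hA
    · exact (recoil_iff ρ hA).2 hc
    · rintro ⟨h, -⟩
      simp only [mul_eq_left] at h
      exact hs1 h
    · rintro ⟨p, q⟩ ⟨h, ⟨⟨h1, h2, h3⟩, -⟩ | ⟨⟨h1, h2, h3⟩, -⟩⟩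
      · exact Prod.ext h1 (f1 p q h h1)
      · have := f2 p q h h1
        simp only at h2
        rw [this, inv_mul_cancel_left] at h2
        exact absurd (adj_of_simple hρ h2) hc
end

section
/- Let n be a positive integer and let I, J ⊆ {1,…,n−1}. If σ, σ′ ∈ S_n satisfy R(σ) = R(σ′), then the number of pairs (π, ρ) ∈ S_n × S_n with πρ = σ, R(π) = I and R(ρ) = J equals the number of pairs (π, ρ) with πρ = σ′, R(π) = I and R(ρ) = J. -/
namespace RecoilAux

open Equiv

def Adj {n : ℕ} (a b : Fin n) : Prop := (a : ℕ) + 1 = b ∨ (b : ℕ) + 1 = a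

instance {n : ℕ} (a b : Fin n) : Decidable (Adj a b) := by unfold Adj; infer_instance

lemma Adj.symm {n : ℕ} {a b : Fin n} (h : Adj a b) : Adj b a := by
  unfold Adj at *; omega

lemma swap_lt {n : ℕ} {x y u v : Fin n} (hxy : Adj x y) (h1 : ¬ (u = x ∧ v = y))
    (h2 : ¬ (u = y ∧ v = x)) : swap x y u < swap x y v ↔ u < v := by
  simp only [Equiv.swap_apply_def]
  unfold Adj at hxy
  simp only [Fin.ext_iff] at h1 h2
  split_ifs <;> simp only [Fin.ext_iff, Fin.lt_def] at * <;> omega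

lemma recoil_swap {n : ℕ} (π : Perm (Fin n)) {x y : Fin n} (hxy : Adj x y)
    (hn : ¬ Adj (π x) (π y)) : recoilSet (π * swap x y) = recoilSet π := by
  ext k
  simp only [recoilSet, Finset.mem_filter, Finset.mem_univ, true_and, mul_inv_rev, swap_inv,
    Perm.mul_apply]
  refine exists_congr fun hk => swap_lt hxy ?_ ?_
  · rintro ⟨rfl, rfl⟩
    apply hn
    simp [Adj]
  · rintro ⟨rfl, rfl⟩
    apply hn
    simp [Adj]

lemma mem_recoil {n : ℕ} (σ : Perm (Fin n)) (p q : Fin n) (h : (σ q : ℕ) + 1 = σ p) :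
    σ q ∈ recoilSet σ ↔ p < q := by
  have e : ∀ hh, (⟨(σ q : ℕ) + 1, hh⟩ : Fin n) = σ p := fun hh => Fin.ext h
  have := (σ p).2
  simp only [recoilSet, Finset.mem_filter, Finset.mem_univ, true_and, e]
  simp
  omega

def step {n : ℕ} (x y : Fin n) (pr : Perm (Fin n) × Perm (Fin n)) :
    Perm (Fin n) × Perm (Fin n) :=
  if Adj (pr.2 x) (pr.2 y) then (pr.1 * swap (pr.2 x) (pr.2 y), pr.2)
  else (pr.1, pr.2 * swap x y)

lemma step_step {n : ℕ} (x y : Fin n) (pr : Perm (Fin n) × Perm (Fin n)) :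
    step x y (step x y pr) = pr := by
  by_cases h : Adj (pr.2 x) (pr.2 y)
  · simp [step, h, mul_assoc]
  · have h' : ¬ Adj (pr.2 y) (pr.2 x) := fun t => h t.symm
    simp [step, h, h', mul_assoc]

def S {n : ℕ} (I J : Finset (Fin n)) (σ : Perm (Fin n)) : Finset (Perm (Fin n) × Perm (Fin n)) :=
  Finset.univ.filter fun pr : Equiv.Perm (Fin n) × Equiv.Perm (Fin n) =>
        pr.1 * pr.2 = σ ∧ recoilSet pr.1 = I ∧ recoilSet pr.2 = J

lemma step_mem {n : ℕ} (I J : Finset (Fin n)) (σ : Perm (Fin n)) {x y : Fin n} (hxy : Adj x y)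
    (hn : ¬ Adj (σ x) (σ y)) (pr) (h : pr ∈ S I J σ) : step x y pr ∈ S I J (σ * swap x y) := by
  obtain ⟨π, ρ⟩ := pr
  simp only [S, Finset.mem_filter, Finset.mem_univ, true_and] at h ⊢
  obtain ⟨rfl, rfl, rfl⟩ := h
  by_cases h : Adj (ρ x) (ρ y)
  · simp only [step, h, if_true]
    refine ⟨?_, recoil_swap π h hn, trivial⟩
    rw [mul_assoc, mul_assoc, Equiv.mul_swap_eq_swap_mul]
  · simp only [step, h, if_false]
    exact ⟨by rw [mul_assoc], trivial, recoil_swap ρ hxy h⟩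

lemma card_swap {n : ℕ} (I J : Finset (Fin n)) (σ : Perm (Fin n)) {x y : Fin n} (hxy : Adj x y)
    (hn : ¬ Adj (σ x) (σ y)) : (S I J (σ * swap x y)).card = (S I J σ).card := by
  symm
  refine Finset.card_bij' (fun a _ => step x y a) (fun a _ => step x y a)
    (step_mem I J σ hxy hn) ?_ (fun a _ => step_step x y a) (fun a _ => step_step x y a)
  intro a ha
  have := step_mem I J (σ * swap x y) hxy (by simpa using fun t => hn (Adj.symm t)) a ha
  simpa [mul_assoc] using this

def Good {n : ℕ} (σ : Perm (Fin n)) : Prop :=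
  ∀ x y : Fin n, (x : ℕ) + 1 = y → (σ x : ℕ) ≤ σ y + 1

def wt {n : ℕ} (σ : Perm (Fin n)) : ℤ := ∑ i : Fin n, ((i : ℕ) : ℤ) * ((σ i : ℕ) : ℤ)

lemma wt_swap {n : ℕ} (σ : Perm (Fin n)) (x y : Fin n) (hxy : (x : ℕ) + 1 = y)
    (h : σ y < σ x) : wt σ < wt (σ * swap x y) := by
  have hne : x ≠ y := by rintro rfl; omega
  have key : wt (σ * swap x y) - wt σ = ((σ x : ℕ) : ℤ) - ((σ y : ℕ) : ℤ) := by
    unfold wt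
    rw [← Finset.sum_sub_distrib, ← Finset.sum_subset (Finset.subset_univ {x, y}),
      Finset.sum_pair hne]
    · simp only [Perm.mul_apply, swap_apply_left, swap_apply_right, ← hxy]
      push_cast
      ring
    · intro z _ hz
      simp only [Finset.mem_insert, Finset.mem_singleton, not_or] at hz
      simp [swap_apply_of_ne_of_ne hz.1 hz.2]
  have : (σ y : ℕ) < σ x := h
  omega

lemma exists_good {n : ℕ} (I J : Finset (Fin n)) (σ : Perm (Fin n)) :
    ∃ τ : Perm (Fin n), Good τ ∧ recoilSet τ = recoilSet σ ∧ (S I J τ).card = (S I J σ).card := by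
  obtain ⟨τ, hτ, hmax⟩ := Finset.exists_max_image
    (Finset.univ.filter fun τ : Perm (Fin n) =>
      recoilSet τ = recoilSet σ ∧ (S I J τ).card = (S I J σ).card) wt ⟨σ, by simp⟩
  simp only [Finset.mem_filter, Finset.mem_univ, true_and] at hτ hmax
  refine ⟨τ, ?_, hτ⟩
  intro x y hxy
  by_contra hc
  have hA : Adj x y := Or.inl hxy
  have hB : ¬ Adj (τ x) (τ y) := by unfold Adj; omega
  have := hmax (τ * swap x y) ⟨(recoil_swap τ hA hB).trans hτ.1, (card_swap I J τ hA hB).trans hτ.2⟩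
  have := wt_swap τ x y hxy (by rw [Fin.lt_def]; omega)
  omega

lemma good_recoil {n : ℕ} {σ : Perm (Fin n)} (hσ : Good σ) (p : Fin n) (z : Fin n) :
    ∀ (d : ℕ) (q : Fin n), (q : ℕ) = p + d → (z : ℕ) < σ p → σ q ≤ z → z ∈ recoilSet σ := by
  intro d
  induction d with
  | zero =>
    intro q hq h1 h2
    obtain rfl : q = p := Fin.ext (by omega)
    rw [Fin.le_def] at h2; omega
  | succ d ih =>
    intro q hq h1 h2
    let r : Fin n := ⟨p + d, by omega⟩
    have hr : (r : ℕ) + 1 = q := by simp [r]; omega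
    by_cases h : σ r ≤ z
    · exact ih r rfl h1 h
    · have := hσ r q hr
      rw [Fin.le_def] at h h2
      have hz : z = σ q := Fin.ext (by omega)
      rw [hz, mem_recoil σ r q (by omega), Fin.lt_def]
      omega

lemma recoil_chain {n : ℕ} {σ : Perm (Fin n)} (x : Fin n) : ∀ (d : ℕ) (y : Fin n),
    (y : ℕ) = x + d → (∀ z, x ≤ z → z < y → z ∈ recoilSet σ) → σ⁻¹ y ≤ σ⁻¹ x := by
  intro d
  induction d with
  | zero =>
    intro y hy _
    obtain rfl : y = x := Fin.ext (by omega)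
    rfl
  | succ d ih =>
    intro y hy h
    let r : Fin n := ⟨x + d, by omega⟩
    have hr : (r : ℕ) + 1 = y := by simp [r]; omega
    have h1 := ih r rfl (fun z hz hz' => h z hz (by rw [Fin.lt_def] at *; omega))
    have h2 := h r (by rw [Fin.le_def]; simp [r]) (by rw [Fin.lt_def]; omega)
    have h3 := (mem_recoil σ (σ⁻¹ y) (σ⁻¹ r) (by simpa using hr)).1 (by simpa using h2)
    exact h3.le.trans h1

lemma good_inv {n : ℕ} {σ : Perm (Fin n)} (hσ : Good σ) {x y : Fin n} (hxy : x < y) :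
    σ⁻¹ y < σ⁻¹ x ↔ ∀ z, x ≤ z → z < y → z ∈ recoilSet σ := by
  constructor
  · intro h z hz hz'
    rw [Fin.lt_def] at h
    exact good_recoil hσ (σ⁻¹ y) z ((σ⁻¹ x : ℕ) - (σ⁻¹ y : ℕ)) (σ⁻¹ x) (by omega)
      (by simpa using hz') (by simpa using hz)
  · intro h
    rw [Fin.lt_def] at hxy
    refine lt_of_le_of_ne (recoil_chain x ((y : ℕ) - x) y (by omega) h) ?_
    intro e
    have := σ⁻¹.injective e
    subst this
    omega

lemma good_unique {n : ℕ} {σ τ : Perm (Fin n)} (hσ : Good σ) (hτ : Good τ)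
    (h : recoilSet σ = recoilSet τ) : σ = τ := by
  have key : ∀ x y : Fin n, σ⁻¹ y < σ⁻¹ x → τ⁻¹ y < τ⁻¹ x := by
    intro x y hlt
    rcases lt_trichotomy x y with hxy | rfl | hxy
    · rw [good_inv hτ hxy, ← h, ← good_inv hσ hxy]; exact hlt
    · exact absurd hlt (lt_irrefl _)
    · by_contra hc
      have hne : τ⁻¹ x ≠ τ⁻¹ y := fun e => hxy.ne (τ⁻¹.injective e).symm
      have h1 : τ⁻¹ x < τ⁻¹ y := lt_of_le_of_ne (not_lt.1 hc) hne
      rw [good_inv hτ hxy, ← h, ← good_inv hσ hxy] at h1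
      exact absurd hlt h1.asymm
  have hm : StrictMono (τ⁻¹ * σ : Perm (Fin n)) := by
    intro a b hab
    exact key (σ b) (σ a) (by simpa using hab)
  have : (StrictMono.orderIsoOfSurjective _ hm (Equiv.surjective _)) = OrderIso.refl (Fin n) :=
    Subsingleton.elim _ _
  ext a
  have h2 : (τ⁻¹ * σ) a = a := by
    have := congrArg (fun f => f a) this
    simpa using this
  have h3 : σ a = τ a := by
    have := congrArg τ h2
    simpa using this
  rw [h3]

end RecoilAux

/-- If `R(σ) = R(σ′)` then the number of factorizations `σ = πρ` with `R(π) = I` and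
`R(ρ) = J` equals the corresponding number for `σ′`. -/
theorem statement2 (n : ℕ) (hn : 0 < n) (I J : Finset (Fin n)) (σ σ' : Equiv.Perm (Fin n))
    (h : recoilSet σ = recoilSet σ') :
    (Finset.univ.filter fun pr : Equiv.Perm (Fin n) × Equiv.Perm (Fin n) =>
        pr.1 * pr.2 = σ ∧ recoilSet pr.1 = I ∧ recoilSet pr.2 = J).card =
    (Finset.univ.filter fun pr : Equiv.Perm (Fin n) × Equiv.Perm (Fin n) =>
        pr.1 * pr.2 = σ' ∧ recoilSet pr.1 = I ∧ recoilSet pr.2 = J).card := by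
  obtain ⟨τ, h1, h2, h3⟩ := RecoilAux.exists_good I J σ
  obtain ⟨τ', h1', h2', h3'⟩ := RecoilAux.exists_good I J σ'
  have e := RecoilAux.good_unique h1 h1' (h2.trans (h.trans h2'.symm))
  subst e
  exact h3.symm.trans h3'
end

section
/- Let n be a positive integer. For each I ⊆ {1,…,n−1} let Y_I = Σ_{σ : R(σ)=I} σ in the rational group algebra ℚ[S_n]. Then for all I, J ⊆ {1,…,n−1} there exist nonnegative integers a_{IJK}, indexed by subsets K ⊆ {1,…,n−1}, such that Y_I · Y_J = Σ_K a_{IJK} Y_K. Consequently the linear span of the elements Y_I is a subalgebra of ℚ[S_n]. -/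
/-- `Y_I`: the sum, in the group algebra `ℚ[S_n]`, of all permutations with recoil set `I`. -/
noncomputable def Y (n : ℕ) (I : Finset (Fin n)) : MonoidAlgebra ℚ (Equiv.Perm (Fin n)) :=
  ∑ σ ∈ Finset.univ.filter (fun σ => recoilSet σ = I),
    MonoidAlgebra.of ℚ (Equiv.Perm (Fin n)) σ

def nadj {n : ℕ} (a b : Fin n) : Prop := (a : ℕ) + 1 = b ∨ (b : ℕ) + 1 = a

instance {n : ℕ} (a b : Fin n) : Decidable (nadj a b) := by unfold nadj; infer_instance

lemma nadj_symm {n : ℕ} {a b : Fin n} (h : nadj a b) : nadj b a := Or.symm h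

lemma swap_lt_iff {n : ℕ} {a b p q : Fin n} (hab : nadj a b)
    (h1 : ¬ (p = a ∧ q = b)) (h2 : ¬ (p = b ∧ q = a)) :
    Equiv.swap a b p < Equiv.swap a b q ↔ p < q := by
  unfold nadj at hab
  simp only [Equiv.swap_apply_def, Fin.ext_iff, Fin.lt_def] at *
  split_ifs <;> omega

lemma recoil_swap {n : ℕ} (π : Equiv.Perm (Fin n)) {a b : Fin n} (hab : nadj a b)
    (h : ¬ nadj (π a) (π b)) : recoilSet (π * Equiv.swap a b) = recoilSet π := by
  ext x
  simp only [recoilSet, Finset.mem_filter, Finset.mem_univ, true_and, mul_inv_rev,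
    Equiv.Perm.mul_apply, Equiv.swap_inv]
  apply exists_congr
  intro hx
  apply swap_lt_iff hab
  · rintro ⟨rfl, rfl⟩
    apply h
    right
    simp
  · rintro ⟨rfl, rfl⟩
    apply h
    left
    simp

def cset {n : ℕ} (I J : Finset (Fin n)) (π : Equiv.Perm (Fin n)) :
    Finset (Equiv.Perm (Fin n)) :=
  Finset.univ.filter fun τ => recoilSet (π * τ⁻¹) = I ∧ recoilSet τ = J

lemma cset_le {n : ℕ} (I J : Finset (Fin n)) (π : Equiv.Perm (Fin n)) {a b : Fin n}
    (hab : nadj a b) (h : ¬ nadj (π a) (π b)) :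
    (cset I J π).card ≤ (cset I J (π * Equiv.swap a b)).card := by
  apply Finset.card_le_card_of_injOn
    (fun τ => if nadj (τ a) (τ b) then τ else τ * Equiv.swap a b)
  · intro τ hτ
    simp only [cset, Finset.coe_filter, Finset.mem_univ, true_and, Set.mem_ofPred_eq] at hτ ⊢
    split_ifs with ht
    · refine ⟨?_, hτ.2⟩
      rw [← hτ.1]
      have e : π * Equiv.swap a b * τ⁻¹ = (π * τ⁻¹) * Equiv.swap (τ a) (τ b) := by
        rw [Equiv.swap_apply_apply]; group
      rw [e]
      apply recoil_swap _ ht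
      simpa using h
    · refine ⟨?_, ?_⟩
      · rw [← hτ.1]
        congr 1
        rw [mul_inv_rev, Equiv.swap_inv]
        simp only [mul_assoc, Equiv.swap_mul_self_mul]
      · rw [recoil_swap _ hab ht]
        exact hτ.2
  · intro τ _ τ' _ he
    simp only at he
    split_ifs at he with h1 h2 h2
    · exact he
    · exfalso
      rw [he] at h1
      apply h2
      simpa using nadj_symm h1
    · exfalso
      rw [← he] at h2
      apply h1
      simpa using nadj_symm h2
    · exact mul_right_cancel he

lemma cset_eq {n : ℕ} (I J : Finset (Fin n)) (π : Equiv.Perm (Fin n)) {a b : Fin n}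
    (hab : nadj a b) (h : ¬ nadj (π a) (π b)) :
    (cset I J (π * Equiv.swap a b)).card = (cset I J π).card := by
  apply le_antisymm _ (cset_le I J π hab h)
  have := cset_le I J (π * Equiv.swap a b) hab (by
    intro h'; apply h; simpa using nadj_symm h')
  simpa [mul_assoc] using this

lemma sum_swap_lt {n : ℕ} (g : Equiv.Perm (Fin n)) {a b : Fin n} (hab : (a : ℕ) + 1 = b)
    (h : g b < g a) :
    ∑ v : Fin n, ((v : ℕ) : ℤ) * (g v : ℕ) < ∑ v : Fin n, ((v : ℕ) : ℤ) * (g (Equiv.swap a b v) : ℕ) := by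
  have hne : a ≠ b := by rintro rfl; omega
  have e : ∑ v : Fin n, ((v : ℕ) : ℤ) * (g (Equiv.swap a b v) : ℕ)
      = ∑ v : Fin n, ((Equiv.swap a b v : ℕ) : ℤ) * (g v : ℕ) := by
    rw [← Equiv.sum_comp (Equiv.swap a b)]
    simp
  rw [e, ← sub_pos, ← Finset.sum_sub_distrib, Finset.sum_eq_add a b hne]
  · simp only [Equiv.swap_apply_left, Equiv.swap_apply_right]
    rw [← hab]
    rw [Fin.lt_def] at h
    push_cast
    have : ((g b : ℕ) : ℤ) < (g a : ℕ) := by exact_mod_cast h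
    linarith
  · intro c _ hc
    rw [Equiv.swap_apply_of_ne_of_ne hc.1 hc.2]; ring
  · simp
  · simp

lemma exists_desc {n : ℕ} (g : Equiv.Perm (Fin n)) (h : g ≠ 1) :
    ∃ a b : Fin n, (a : ℕ) + 1 = b ∧ g b < g a := by
  by_contra! hc
  apply h
  have hm : StrictMono g := by
    cases n with
    | zero => intro a; exact a.elim0
    | succ m =>
      rw [Fin.strictMono_iff_lt_succ]
      intro i
      refine lt_of_le_of_ne (hc _ _ (by simp)) ?_
      intro e
      have := g.injective e
      simp [Fin.ext_iff] at this
  have := Subsingleton.elim (StrictMono.orderIsoOfSurjective g hm g.surjective) (OrderIso.refl _)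
  ext x
  have := congrArg (fun f => f x) this
  simpa using congrArg Fin.val this

lemma cset_const {n : ℕ} (I J : Finset (Fin n)) (π π' : Equiv.Perm (Fin n))
    (h : recoilSet π = recoilSet π') : (cset I J π).card = (cset I J π').card := by
  classical
  let S : Finset (Equiv.Perm (Fin n)) := Finset.univ.filter fun ρ =>
    recoilSet ρ = recoilSet π' ∧ (cset I J ρ).card = (cset I J π).card
  obtain ⟨ρ, hρ, hmax⟩ := Finset.exists_max_image S
    (fun ρ => ∑ v : Fin n, ((v : ℕ) : ℤ) * ((π'⁻¹ * ρ) v : ℕ)) ⟨π, by simp [S, h]⟩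
  simp only [S, Finset.mem_filter, Finset.mem_univ, true_and] at hρ
  by_cases hg : π'⁻¹ * ρ = 1
  · rw [inv_mul_eq_one] at hg
    rw [← hρ.2, hg]
  · exfalso
    obtain ⟨a, b, hab, hlt⟩ := exists_desc _ hg
    have hna : ¬ nadj (ρ a) (ρ b) := by
      have key : ∀ x, x ∈ recoilSet ρ ↔ x ∈ recoilSet π' := fun x => by rw [hρ.1]
      simp only [recoilSet, Finset.mem_filter, Finset.mem_univ, true_and] at key
      simp only [Equiv.Perm.mul_apply] at hlt
      rintro (h1 | h1)
      · have hx : (ρ a : ℕ) + 1 < n := by rw [h1]; exact (ρ b).2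
        have e : (⟨(ρ a : ℕ) + 1, hx⟩ : Fin n) = ρ b := Fin.ext h1
        obtain ⟨_, h2⟩ := (key (ρ a)).2 ⟨hx, by rw [e]; exact hlt⟩
        rw [e] at h2
        simp at h2; rw [Fin.lt_def] at h2
        omega
      · have hx : (ρ b : ℕ) + 1 < n := by rw [h1]; exact (ρ a).2
        have e : (⟨(ρ b : ℕ) + 1, hx⟩ : Fin n) = ρ a := Fin.ext h1
        obtain ⟨_, h2⟩ := (key (ρ b)).1 ⟨hx, by rw [e]; simp; rw [Fin.lt_def]; omega⟩
        rw [e] at h2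
        exact lt_asymm hlt h2
    have := hmax (ρ * Equiv.swap a b) (by
      simp only [S, Finset.mem_filter, Finset.mem_univ, true_and]
      exact ⟨(recoil_swap _ (Or.inl hab) hna).trans hρ.1,
        (cset_eq I J _ (Or.inl hab) hna).trans hρ.2⟩)
    have h3 := sum_swap_lt _ hab hlt
    simp only [Equiv.Perm.mul_apply] at this h3
    exact absurd this (not_le.2 h3)

lemma Y_mul {n : ℕ} (I J : Finset (Fin n)) :
    Y n I * Y n J = ∑ π, ((cset I J π).card : ℚ) •
      MonoidAlgebra.of ℚ (Equiv.Perm (Fin n)) π := by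
  have h1 : ∀ π : Equiv.Perm (Fin n), ((cset I J π).card : ℚ) •
      MonoidAlgebra.of ℚ (Equiv.Perm (Fin n)) π =
      ∑ τ, if recoilSet (π * τ⁻¹) = I ∧ recoilSet τ = J then
        MonoidAlgebra.of ℚ (Equiv.Perm (Fin n)) π else 0 := by
    intro π
    rw [← Finset.sum_filter, Finset.sum_const, Nat.cast_smul_eq_nsmul]
    rfl
  simp only [h1]
  rw [Finset.sum_comm]
  unfold Y
  rw [Finset.sum_mul_sum, Finset.sum_comm, Finset.sum_filter]
  refine Finset.sum_congr rfl fun τ _ => ?_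
  rw [← Equiv.sum_comp (Equiv.mulRight τ), Finset.sum_filter]
  by_cases hJ : recoilSet τ = J <;> simp [hJ]

theorem statement3 (n : ℕ) (hn : 0 < n) :
    (∀ I J : Finset (Fin n), ∃ a : Finset (Fin n) → ℕ,
      Y n I * Y n J = ∑ K : Finset (Fin n), (a K : ℚ) • Y n K) ∧
    (∀ x y : MonoidAlgebra ℚ (Equiv.Perm (Fin n)),
      x ∈ Submodule.span ℚ (Set.range (Y n)) → y ∈ Submodule.span ℚ (Set.range (Y n)) →
      x * y ∈ Submodule.span ℚ (Set.range (Y n))) := by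
  have main : ∀ I J : Finset (Fin n), ∃ a : Finset (Fin n) → ℕ,
      Y n I * Y n J = ∑ K : Finset (Fin n), (a K : ℚ) • Y n K := by
    intro I J
    classical
    refine ⟨fun K => if h : ∃ π : Equiv.Perm (Fin n), recoilSet π = K then
      (cset I J h.choose).card else 0, ?_⟩
    rw [Y_mul, ← Finset.sum_fiberwise Finset.univ (recoilSet (n := n))]
    refine Finset.sum_congr rfl fun K _ => ?_
    unfold Y
    rw [Finset.smul_sum]
    refine Finset.sum_congr rfl fun π hπ => ?_
    have hK : recoilSet π = K := by simpa using hπ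
    have hex : ∃ π : Equiv.Perm (Fin n), recoilSet π = K := ⟨π, hK⟩
    beta_reduce
    rw [dif_pos hex, cset_const I J π hex.choose (hK.trans hex.choose_spec.symm)]
  refine ⟨main, fun x y hx hy => ?_⟩
  induction hx using Submodule.span_induction with
  | zero => rw [zero_mul]; exact Submodule.zero_mem _
  | add u v _ _ hu hv => rw [add_mul]; exact Submodule.add_mem _ hu hv
  | smul c u _ hu => rw [smul_mul_assoc]; exact Submodule.smul_mem _ _ hu
  | mem u hu =>
    obtain ⟨I, rfl⟩ := hu
    induction hy using Submodule.span_induction with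
    | zero => rw [mul_zero]; exact Submodule.zero_mem _
    | add u v _ _ hu hv => rw [mul_add]; exact Submodule.add_mem _ hu hv
    | smul c u _ hu => rw [mul_smul_comm]; exact Submodule.smul_mem _ _ hu
    | mem v hv =>
      obtain ⟨J, rfl⟩ := hv
      obtain ⟨a, ha⟩ := main I J
      rw [ha]
      exact Submodule.sum_mem _ fun K _ =>
        Submodule.smul_mem _ _ (Submodule.subset_span ⟨K, rfl⟩)
end

section
/- Let n be a positive integer and I ⊆ {1,…,n−1}. Then the recoil class 𝒴_I = {σ ∈ S_n : R(σ) = I} has a minimum element α_I and a maximum element β_I for the right weak order, and 𝒴_I is the interval [α_I, β_I] = {σ ∈ S_n : α_I ≤_w σ ≤_w β_I}. -/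
/-- The Coxeter length of a permutation: its number of inversions. -/
def invLength {n : ℕ} (σ : Equiv.Perm (Fin n)) : ℕ :=
  (Finset.univ.filter fun p : Fin n × Fin n => p.1 < p.2 ∧ σ p.2 < σ p.1).card

/-- The right weak order: `π ≤_w σ` iff `ℓ(π) + ℓ(π⁻¹σ) = ℓ(σ)`. -/
def WeakLe {n : ℕ} (π σ : Equiv.Perm (Fin n)) : Prop :=
  invLength π + invLength (π⁻¹ * σ) = invLength σ

def vInv {n : ℕ} (σ : Equiv.Perm (Fin n)) : Finset (Fin n × Fin n) :=
  Finset.univ.filter fun p => p.1 < p.2 ∧ σ⁻¹ p.2 < σ⁻¹ p.1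

theorem invLength_mul {n : ℕ} (π σ : Equiv.Perm (Fin n)) :
    invLength (π⁻¹ * σ) = (vInv π \ vInv σ).card + (vInv σ \ vInv π).card := by
  rw [← Finset.card_union_of_disjoint (by
    rw [Finset.disjoint_left]; intro x; simp only [Finset.mem_sdiff]; tauto)]
  unfold invLength
  refine Finset.card_bij' (fun p _ => (min (σ p.1) (σ p.2), max (σ p.1) (σ p.2)))
    (fun p _ => (min (σ⁻¹ p.1) (σ⁻¹ p.2), max (σ⁻¹ p.1) (σ⁻¹ p.2))) ?_ ?_ ?_ ?_
  · rintro ⟨x, y⟩ h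
    obtain ⟨-, h1, h2⟩ := Finset.mem_filter.1 h
    simp only [Equiv.Perm.mul_apply] at h1 h2
    have hne : σ x ≠ σ y := fun h => h1.ne (σ.injective h)
    rcases lt_or_gt_of_ne hne with h | h
    · simp [vInv, min_eq_left h.le, max_eq_right h.le, h, h1.le]
      exact Or.inl h2
    · simp [vInv, min_eq_right h.le, max_eq_left h.le, h, h1]
      exact h2.le
  · rintro ⟨a, b⟩ h
    simp only [vInv, Finset.mem_union, Finset.mem_sdiff, Finset.mem_filter, Finset.mem_univ,
      true_and, not_and, not_lt] at h
    rcases h with ⟨⟨h1, h2⟩, h3⟩ | ⟨⟨h1, h2⟩, h3⟩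
    · have h4 : σ⁻¹ a < σ⁻¹ b := lt_of_le_of_ne (h3 h1) (fun h => h1.ne (σ⁻¹.injective h))
      simp only [min_eq_left h4.le, max_eq_right h4.le]
      refine Finset.mem_filter.2 ⟨Finset.mem_univ _, h4, ?_⟩
      simpa using h2
    · have h4 : π⁻¹ a < π⁻¹ b := lt_of_le_of_ne (h3 h1) (fun h => h1.ne (π⁻¹.injective h))
      simp only [min_eq_right h2.le, max_eq_left h2.le]
      refine Finset.mem_filter.2 ⟨Finset.mem_univ _, h2, ?_⟩
      simpa using h4
  · rintro ⟨x, y⟩ h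
    simp only [Finset.mem_filter, Finset.mem_univ, true_and] at h
    rcases le_total (σ x) (σ y) with h' | h' <;> simp [h', h.1.le]
  · rintro ⟨a, b⟩ h
    have h1 : a < b := by
      simp only [vInv, Finset.mem_union, Finset.mem_sdiff, Finset.mem_filter] at h
      tauto
    rcases le_total (σ⁻¹ a) (σ⁻¹ b) with h' | h'
    · simp only [min_eq_left h', max_eq_right h']; simp [h1.le]
    · simp only [min_eq_right h', max_eq_left h']; simp [h1.le]

theorem invLength_eq {n : ℕ} (σ : Equiv.Perm (Fin n)) : invLength σ = (vInv σ).card := by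
  have h := invLength_mul 1 σ
  have h1 : vInv (1 : Equiv.Perm (Fin n)) = ∅ := by
    ext p; simp only [vInv, Finset.mem_filter, inv_one, Equiv.Perm.one_apply]
    simpa using fun h => h.le
  simpa [h1] using h

theorem weakLe_iff {n : ℕ} (π σ : Equiv.Perm (Fin n)) : WeakLe π σ ↔ vInv π ⊆ vInv σ := by
  unfold WeakLe
  rw [invLength_mul, invLength_eq, invLength_eq, ← Finset.sdiff_eq_empty_iff_subset,
    ← Finset.card_eq_zero]
  have h1 := Finset.card_sdiff_add_card_inter (vInv π) (vInv σ)
  have h2 := Finset.card_sdiff_add_card_inter (vInv σ) (vInv π)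
  rw [Finset.inter_comm] at h2
  omega

theorem exists_perm {n : ℕ} (f : Fin n → ℤ) (hf : Function.Injective f) :
    ∃ σ : Equiv.Perm (Fin n), ∀ x y, σ⁻¹ x < σ⁻¹ y ↔ f x < f y := by
  refine ⟨Tuple.sort f, fun x y => ?_⟩
  have h : StrictMono (f ∘ Tuple.sort f) :=
    (Tuple.monotone_sort f).strictMono_of_injective (hf.comp (Equiv.injective _))
  rw [← h.lt_iff_lt]
  simp

theorem recoil_mono {n : ℕ} {π σ : Equiv.Perm (Fin n)} (h : vInv π ⊆ vInv σ) :
    recoilSet π ⊆ recoilSet σ := by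
  intro i hi
  simp only [recoilSet, Finset.mem_filter, Finset.mem_univ, true_and] at hi ⊢
  obtain ⟨h1, h2⟩ := hi
  have : (i, (⟨(i : ℕ) + 1, h1⟩ : Fin n)) ∈ vInv π := by
    exact Finset.mem_filter.2 ⟨Finset.mem_univ _, Fin.lt_def.2 (Nat.lt_succ_self _), h2⟩
  have := h this
  simp only [vInv, Finset.mem_filter] at this
  exact ⟨h1, this.2.2⟩

/-- Permutation whose inversions are the pairs with equal count. -/
theorem exists_alpha (n : ℕ) (c : ℕ → ℕ) (hc : Monotone c) :
    ∃ σ : Equiv.Perm (Fin n), ∀ a b : Fin n, a < b → (σ⁻¹ b < σ⁻¹ a ↔ c a = c b) := by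
  have key : ∀ a b : Fin n, a < b →
      (((c b : ℤ) * n - b < (c a : ℤ) * n - a ↔ c a = c b) ∧
        (c b : ℤ) * n - b ≠ (c a : ℤ) * n - a) := by
    intro a b hab
    have h1 : c a ≤ c b := hc (Fin.le_def.1 hab.le)
    have h2 := b.2
    have h3 := Fin.lt_def.1 hab
    rcases h1.eq_or_lt with h | h
    · rw [h]; constructor
      · simp only [iff_true]; omega
      · omega
    · have : ((c a : ℤ) + 1) * n ≤ c b * n := by
        apply mul_le_mul_of_nonneg_right <;> omega
      rw [add_mul] at this
      constructor
      · constructor <;> intro h' <;> omega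
      · omega
  obtain ⟨σ, hσ⟩ := exists_perm (fun a : Fin n => (c a : ℤ) * n - a) (by
    intro a b hab
    by_contra hne
    rcases lt_or_gt_of_ne hne with h | h
    · exact (key a b h).2 hab.symm
    · exact (key b a h).2 hab)
  exact ⟨σ, fun a b hab => by rw [hσ]; exact (key a b hab).1⟩


theorem run {n : ℕ} (g : Fin n → Fin n) (P : ℕ → Prop)
    [DecidablePred P] (r : Fin n → Fin n → Prop) (hr : ∀ x y z, r x y → r y z → r x z)
    (hg : ∀ (i : ℕ) (h : i + 1 < n), ¬ P i → r (g ⟨i, by omega⟩) (g ⟨i + 1, h⟩))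
    (a b : Fin n) (hab : a < b) (hc : Nat.count P a = Nat.count P b) : r (g a) (g b) := by
  obtain ⟨a, ha⟩ := a
  obtain ⟨b, hb⟩ := b
  simp only [Fin.lt_def] at hab hc
  induction b, hab using Nat.le_induction with
  | base =>
    apply hg
    intro h
    simp [Nat.count_succ, h] at hc
  | succ b hab ih =>
    have h1 : Nat.count P a ≤ Nat.count P b := Nat.count_monotone P (by omega)
    rw [Nat.count_succ] at hc
    have h2 : ¬ P b := by intro h; simp [h] at hc; omega
    simp only [h2, if_false, add_zero] at hc
    exact hr _ _ _ (ih (by omega) hc) (hg b hb h2)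

theorem exists_beta (n : ℕ) (c : ℕ → ℕ) (hc : Monotone c) :
    ∃ σ : Equiv.Perm (Fin n), ∀ a b : Fin n, a < b → (σ⁻¹ b < σ⁻¹ a ↔ c a ≠ c b) := by
  obtain ⟨σ, hσ⟩ := exists_alpha n c hc
  obtain ⟨τ, hτ⟩ := exists_perm (fun a : Fin n => -((σ⁻¹ a : Fin n) : ℤ)) (by
    intro a b hab
    apply σ⁻¹.injective
    apply Fin.ext
    have : -((σ⁻¹ a : Fin n) : ℤ) = -((σ⁻¹ b : Fin n) : ℤ) := hab
    omega)
  refine ⟨τ, fun a b hab => ?_⟩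
  have hne : σ⁻¹ a ≠ σ⁻¹ b := fun h => hab.ne (σ⁻¹.injective h)
  rw [hτ, ne_eq, ← hσ a b hab, Fin.lt_def]
  have := Fin.val_ne_of_ne hne
  omega

theorem mem_recoil {n : ℕ} (σ : Equiv.Perm (Fin n)) (i : ℕ) (h : i + 1 < n) :
    (⟨i, by omega⟩ : Fin n) ∈ recoilSet σ ↔ σ⁻¹ ⟨i + 1, h⟩ < σ⁻¹ ⟨i, by omega⟩ := by
  simp [recoilSet, h]

theorem recoil_eq {n : ℕ} (σ : Equiv.Perm (Fin n)) (I : Finset (Fin n))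
    (hI : ∀ i ∈ I, (i : ℕ) + 1 < n)
    (h : ∀ (i : ℕ) (h : i + 1 < n), σ⁻¹ ⟨i + 1, h⟩ < σ⁻¹ ⟨i, by omega⟩ ↔
      (⟨i, by omega⟩ : Fin n) ∈ I) : recoilSet σ = I := by
  ext i
  constructor
  · intro hi
    have h1 : (i : ℕ) + 1 < n := by
      simp only [recoilSet, Finset.mem_filter] at hi
      exact hi.2.1
    exact (h i h1).1 ((mem_recoil σ i h1).1 hi)
  · intro hi
    exact (mem_recoil σ i (hI i hi)).2 ((h i (hI i hi)).2 hi)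

/-- Each recoil class has a minimum `α_I` and maximum `β_I` for the right weak order,
and is exactly the weak-order interval `[α_I, β_I]`. -/
theorem statement4 (n : ℕ) (hn : 0 < n) (I : Finset (Fin n)) (hI : ∀ i ∈ I, (i : ℕ) + 1 < n) :
    ∃ α β : Equiv.Perm (Fin n), recoilSet α = I ∧ recoilSet β = I ∧
      ∀ σ : Equiv.Perm (Fin n), recoilSet σ = I ↔ (WeakLe α σ ∧ WeakLe σ β) := by
  classical
  let P : ℕ → Prop := fun k => ∃ h : k < n, (⟨k, h⟩ : Fin n) ∈ I
  have hP : ∀ (i : ℕ) (h : i < n), P i ↔ (⟨i, h⟩ : Fin n) ∈ I := fun i h =>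
    ⟨fun h => h.2, fun h' => ⟨h, h'⟩⟩
  obtain ⟨α, hα⟩ := exists_alpha n _ (Nat.count_monotone fun k => ¬ P k)
  obtain ⟨β, hβ⟩ := exists_beta n _ (Nat.count_monotone P)
  have rα : recoilSet α = I := by
    refine recoil_eq α I hI fun i h => ?_
    rw [hα _ _ (Fin.lt_def.2 (Nat.lt_succ_self _)), ← hP]
    by_cases hp : P i <;> simp [Nat.count_succ, hp]
  have rβ : recoilSet β = I := by
    refine recoil_eq β I hI fun i h => ?_
    rw [hβ _ _ (Fin.lt_def.2 (Nat.lt_succ_self _)), ← hP]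
    by_cases hp : P i <;> simp [Nat.count_succ, hp]
  refine ⟨α, β, rα, rβ, fun σ => ?_⟩
  rw [weakLe_iff, weakLe_iff]
  constructor
  · intro hσ
    constructor
    · rintro ⟨a, b⟩ hab
      simp only [vInv, Finset.mem_filter, Finset.mem_univ, true_and] at hab ⊢
      refine ⟨hab.1, ?_⟩
      refine run (fun x => σ⁻¹ x) (fun k => ¬ P k) (fun x y => y < x)
        (fun x y z h1 h2 => h2.trans h1) ?_ a b hab.1 ((hα a b hab.1).1 hab.2)
      intro i h hp
      rw [not_not, hP i (by omega), ← hσ, mem_recoil σ i h] at hp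
      exact hp
    · rintro ⟨a, b⟩ hab
      simp only [vInv, Finset.mem_filter, Finset.mem_univ, true_and] at hab ⊢
      refine ⟨hab.1, (hβ a b hab.1).2 fun hc => ?_⟩
      refine absurd hab.2 (not_lt.2 ?_)
      refine run (fun x => σ⁻¹ x) P (fun x y => x ≤ y)
        (fun x y z h1 h2 => h1.trans h2) ?_ a b hab.1 hc
      intro i h hp
      rw [hP i (by omega), ← hσ, mem_recoil σ i h] at hp
      exact not_lt.1 hp
  · rintro ⟨h1, h2⟩
    apply subset_antisymm
    · rw [← rβ]; exact recoil_mono h2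
    · rw [← rα]; exact recoil_mono h1
end

section
/- Let (W,S) be a Coxeter system with length function ℓ, let w ∈ W and s ∈ S be such that ℓ(ws) = ℓ(w) + 1. Then: (1) if wsw⁻¹ ∉ S, then R(ws) = R(w); (2) if wsw⁻¹ ∈ S, then R(ws) = R(w) ∪ {wsw⁻¹} and R(ws) ≠ R(w). -/
open CoxeterSystem

/-- The recoil set of `w`: the set of simple reflections `s` with `ℓ(sw) = ℓ(w) − 1`. -/
def coxRecoil {B W : Type*} [Group W] {M : CoxeterMatrix B} (cs : CoxeterSystem M W)
    (w : W) : Set W :=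
  {s | s ∈ Set.range cs.simple ∧ cs.length (s * w) + 1 = cs.length w}

open Classical in
/-- sign permutation attached to a simple reflection -/
noncomputable def auxF {B W : Type*} [Group W] {M : CoxeterMatrix B} (cs : CoxeterSystem M W)
    (i : B) : Equiv.Perm (W × ZMod 2) :=
  Function.Involutive.toPerm
    (fun x => (cs.simple i * x.1 * cs.simple i, x.2 + if x.1 = cs.simple i then 1 else 0))
    (by
      rintro ⟨t, e⟩
      have h2 : (1 : ZMod 2) + 1 = 0 := by decide
      have hiff : cs.simple i * t * cs.simple i = cs.simple i ↔ t = cs.simple i := by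
        constructor
        · intro h
          have h3 : cs.simple i * t = 1 := by simpa using h
          have h4 := eq_inv_of_mul_eq_one_right h3
          simpa using h4
        · rintro rfl; simp
      ext
      · simp [mul_assoc]
      · simp only [hiff]
        split_ifs
        · rw [add_assoc, h2, add_zero]
        · simp)

open Classical in
theorem auxF_apply {B W : Type*} [Group W] {M : CoxeterMatrix B} (cs : CoxeterSystem M W)
    (i : B) (t : W) (e : ZMod 2) : auxF cs i (t, e) =
    (cs.simple i * t * cs.simple i, e + if t = cs.simple i then 1 else 0) := rfl

theorem aux_conj {B W : Type*} [Group W] {M : CoxeterMatrix B} (cs : CoxeterSystem M W)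
    (i j : B) (k : ℕ) : cs.simple j * (cs.simple i * cs.simple j) ^ k =
      ((cs.simple i * cs.simple j) ^ k)⁻¹ * cs.simple j := by
  induction k with
  | zero => simp
  | succ k ih =>
    rw [pow_succ, ← mul_assoc, ih, ← pow_succ, pow_succ']
    simp [mul_assoc]

open Classical in
theorem auxF_pow {B W : Type*} [Group W] {M : CoxeterMatrix B} (cs : CoxeterSystem M W)
    (i j : B) (t : W) (e : ZMod 2) (m : ℕ) : ((auxF cs i * auxF cs j) ^ m) (t, e) =
    ((cs.simple i * cs.simple j) ^ m * t * ((cs.simple i * cs.simple j) ^ m)⁻¹,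
      e + ∑ k ∈ Finset.range (2 * m),
        if t = cs.simple j * (cs.simple i * cs.simple j) ^ k then 1 else 0) := by
  induction m with
  | zero => simp
  | succ m ih =>
    rw [pow_succ', Equiv.Perm.mul_apply, ih, Equiv.Perm.mul_apply, auxF_apply, auxF_apply]
    set p := cs.simple i * cs.simple j with hp
    have hpinv : p⁻¹ = cs.simple j * cs.simple i := by simp [hp]
    have h1 : (p ^ m * t * (p ^ m)⁻¹ = cs.simple j) ↔ t = cs.simple j * p ^ (2 * m) := by
      rw [two_mul, pow_add, ← mul_assoc, aux_conj, mul_inv_eq_iff_eq_mul, ← hp, mul_assoc,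
        eq_inv_mul_iff_mul_eq]
    have h2 : (cs.simple j * (p ^ m * t * (p ^ m)⁻¹) * cs.simple j = cs.simple i) ↔
        t = cs.simple j * p ^ (2 * m + 1) := by
      have : (2 * m + 1) = m + (1 + m) := by ring
      rw [this, pow_add, ← mul_assoc (cs.simple j) (p ^ m) (p ^ (1 + m)), aux_conj, ← hp,
        mul_assoc (p ^ m)⁻¹ (cs.simple j) (p ^ (1 + m)), eq_inv_mul_iff_mul_eq,
        pow_add, pow_one, ← mul_assoc (cs.simple j) p (p ^ m), ← mul_inv_eq_iff_eq_mul]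
      generalize p ^ m * t * (p ^ m)⁻¹ = X
      constructor
      · intro h
        rw [hp, ← h]; simp [mul_assoc]
      · intro h
        rw [h, hp]; simp [mul_assoc]
    rw [show 2 * (m + 1) = 2 * m + 1 + 1 by ring, Finset.sum_range_succ, Finset.sum_range_succ]
    ext
    · simp only [pow_succ', mul_inv_rev, hpinv]
      rw [hp]; simp [mul_assoc]
    · simp only [h1, h2]
      ring

theorem auxF_liftable {B W : Type*} [Group W] {M : CoxeterMatrix B} (cs : CoxeterSystem M W) :
    M.IsLiftable (auxF cs) := by
  classical
  intro i j
  ext1 ⟨t, e⟩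
  rw [auxF_pow, two_mul, Finset.sum_range_add]
  simp only [pow_add, cs.simple_mul_simple_pow, one_mul]
  have h2 : ∀ x : ZMod 2, x + x = 0 := by decide
  rw [h2]; simp

open Classical in
theorem lift_apply {B W : Type*} [Group W] {M : CoxeterMatrix B} (cs : CoxeterSystem M W)
    (ω : List B) (t : W) (e : ZMod 2) :
    cs.lift ⟨auxF cs, auxF_liftable cs⟩ (cs.wordProd ω) (t, e) =
      (cs.wordProd ω * t * (cs.wordProd ω)⁻¹, e + ((cs.rightInvSeq ω).count t : ℕ)) := by
  induction ω with
  | nil => simp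
  | cons i ω ih =>
    rw [cs.wordProd_cons, map_mul, Equiv.Perm.mul_apply, ih, cs.lift_apply_simple, auxF_apply]
    have h : (cs.wordProd ω * t * (cs.wordProd ω)⁻¹ = cs.simple i) ↔
        (cs.wordProd ω)⁻¹ * cs.simple i * cs.wordProd ω = t := by
      rw [mul_inv_eq_iff_eq_mul, mul_assoc, inv_mul_eq_iff_eq_mul, eq_comm]
    ext
    · simp [mul_assoc]
    · simp only [h, rightInvSeq, List.count_cons, beq_iff_eq]
      push_cast
      ring

open Classical in
theorem count_lis {B W : Type*} [Group W] {M : CoxeterMatrix B} (cs : CoxeterSystem M W)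
    (ω ω' : List B) (h : cs.wordProd ω = cs.wordProd ω') (t : W) :
    (((cs.leftInvSeq ω).count t : ℕ) : ZMod 2) = ((cs.leftInvSeq ω').count t : ℕ) := by
  have h1 := lift_apply cs ω.reverse t 0
  have h2 := lift_apply cs ω'.reverse t 0
  rw [cs.wordProd_reverse] at h1 h2
  rw [h, h2] at h1
  have := congrArg Prod.snd h1
  simpa [rightInvSeq_reverse] using this.symm

theorem key {B W : Type*} [Group W] {M : CoxeterMatrix B} (cs : CoxeterSystem M W)
    (w : W) (i j : B) (h1 : cs.length (w * cs.simple j) = cs.length w + 1)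
    (h2 : ¬ cs.length (cs.simple i * w) < cs.length w)
    (h3 : cs.length (cs.simple i * (w * cs.simple j)) + 1 = cs.length (w * cs.simple j)) :
    cs.simple i = w * cs.simple j * w⁻¹ := by
  classical
  obtain ⟨ω, hω, rfl⟩ := cs.exists_isReduced w
  obtain ⟨ν, hν, hνe⟩ := cs.exists_isReduced (cs.simple i * (cs.wordProd ω * cs.simple j))
  have e1 : cs.wordProd (ω.concat j) = cs.wordProd (i :: ν) := by
    rw [cs.wordProd_concat, cs.wordProd_cons, ← hνe]; simp
  have red : cs.IsReduced (i :: ν) := by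
    have := hν.eq
    rw [CoxeterSystem.IsReduced, ← e1, cs.wordProd_concat, ← h3, hνe, this]; rfl
  have hc := count_lis cs _ _ e1 (cs.simple i)
  have hm : cs.simple i ∈ cs.leftInvSeq (i :: ν) := by simp [leftInvSeq]
  rw [List.count_eq_one_of_mem red.nodup_leftInvSeq hm, leftInvSeq_concat] at hc
  have hn : cs.simple i ∉ cs.leftInvSeq ω := fun hh =>
    h2 (cs.isLeftInversion_of_mem_leftInvSeq hω hh).2
  by_contra hne
  have hz : List.count (cs.simple i) ((cs.leftInvSeq ω).concat
      (cs.wordProd ω * cs.simple j * (cs.wordProd ω)⁻¹)) = 0 := by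
    rw [List.count_eq_zero]
    simp [hn, hne]
  rw [hz] at hc
  revert hc; decide

/-- If `ℓ(ws) = ℓ(w) + 1` then `R(ws) = R(w)` when `wsw⁻¹ ∉ S`, and
`R(ws) = R(w) ∪ {wsw⁻¹} ≠ R(w)` when `wsw⁻¹ ∈ S`. -/
theorem statement8 {B W : Type*} [Group W] {M : CoxeterMatrix B} (cs : CoxeterSystem M W)
    (w s : W) (hs : s ∈ Set.range cs.simple)
    (h : cs.length (w * s) = cs.length w + 1) :
    (w * s * w⁻¹ ∉ Set.range cs.simple → coxRecoil cs (w * s) = coxRecoil cs w) ∧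
    (w * s * w⁻¹ ∈ Set.range cs.simple →
      coxRecoil cs (w * s) = coxRecoil cs w ∪ {w * s * w⁻¹} ∧
      coxRecoil cs (w * s) ≠ coxRecoil cs w) := by
  obtain ⟨j, rfl⟩ := hs
  have hsub : coxRecoil cs w ⊆ coxRecoil cs (w * cs.simple j) := by
    rintro _ ⟨⟨i, rfl⟩, hr⟩
    refine ⟨⟨i, rfl⟩, ?_⟩
    have a := cs.length_simple_mul (w * cs.simple j) i
    have b := cs.length_mul_simple (cs.simple i * w) j
    rw [mul_assoc] at b
    omega
  have hsup : ∀ r ∈ coxRecoil cs (w * cs.simple j),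
      r ∈ coxRecoil cs w ∨ r = w * cs.simple j * w⁻¹ := by
    rintro _ ⟨⟨i, rfl⟩, hr⟩
    by_cases hd : cs.length (cs.simple i * w) < cs.length w
    · left
      refine ⟨⟨i, rfl⟩, ?_⟩
      have a := cs.length_simple_mul w i
      omega
    · right
      exact key cs w i j h hd hr
  constructor
  · intro hn
    refine Set.Subset.antisymm ?_ hsub
    intro r hr
    rcases hsup r hr with h1 | h1
    · exact h1
    · exact absurd (h1 ▸ hr.1) hn
  · intro hm
    have e1 : w * cs.simple j * w⁻¹ * (w * cs.simple j) = w := by simp [mul_assoc]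
    have e2 : w * cs.simple j * w⁻¹ * w = w * cs.simple j := by simp
    have m1 : w * cs.simple j * w⁻¹ ∈ coxRecoil cs (w * cs.simple j) :=
      ⟨hm, by rw [e1, h]⟩
    have m2 : w * cs.simple j * w⁻¹ ∉ coxRecoil cs w := by
      rintro ⟨_, h2⟩
      rw [e2] at h2
      omega
    refine ⟨Set.Subset.antisymm hsup ?_, fun he => m2 (he ▸ m1)⟩
    rintro r (hr | rfl)
    · exact hsub hr
    · exact m1
end

section
/- Let (W,S) be a Coxeter system, let w, u, v ∈ W and s ∈ S be such that w = uv and R(ws) = R(w). Then there exists a unique factorization ws = u′v′ such that exactly one of the following holds: (1) u′ = u, v⁻¹v′ ∈ S, and R(v′) = R(v); or (2) v′ = v, u⁻¹u′ ∈ S, and R(u′) = R(u). -/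
theorem dihedral_aux {W : Type*} [Group W] (a b t : W) (hb : b * b = 1)
    (hai : a⁻¹ = a) (hbi : b⁻¹ = b) (k : ℕ) :
    (((a * b) ^ k * t * ((a * b) ^ k)⁻¹ = b) ↔ t = b * (a * b) ^ (2 * k)) ∧
    ((b * ((a * b) ^ k * t * ((a * b) ^ k)⁻¹) * b = a) ↔ t = b * (a * b) ^ (2 * k + 1)) := by
  have key : ∀ k : ℕ, b * (a * b) ^ k = ((a * b) ^ k)⁻¹ * b := by
    intro k
    have : SemiconjBy b (a * b) (a * b)⁻¹ := by
      simp [SemiconjBy, hai, hbi, mul_assoc]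
    have := this.pow_right k
    rw [inv_pow] at this
    exact this
  have e1 : ((a * b) ^ k * t * ((a * b) ^ k)⁻¹ = b) ↔ t = b * (a * b) ^ (2 * k) := by
    rw [two_mul, pow_add, ← mul_assoc, key, mul_inv_eq_iff_eq_mul, ← eq_inv_mul_iff_mul_eq,
      mul_assoc]
  have e2 : (b * ((a * b) ^ k * t * ((a * b) ^ k)⁻¹) * b = a) ↔
      t = b * (a * b) ^ (2 * k + 1) := by
    have : b * (a * b) ^ (2 * k + 1) = ((a * b) ^ k)⁻¹ * (b * a * b) * (a * b) ^ k := by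
      rw [show 2 * k + 1 = k + (1 + k) by ring, pow_add, ← mul_assoc, key, pow_add]
      simp [mul_assoc]
    rw [this]
    generalize (a * b) ^ k = c
    constructor
    · intro h
      rw [← h]
      have hbx : ∀ x, b * (b * x) = x := fun x => by rw [← mul_assoc, hb, one_mul]
      simp [mul_assoc, hb, hbx]
    · rintro rfl
      have hbx : ∀ x, b * (b * x) = x := fun x => by rw [← mul_assoc, hb, one_mul]
      simp [mul_assoc, hb, hbx]
  exact ⟨e1, e2⟩

open Classical in
/-- The generators of the reflection action on `W × ZMod 2`. -/
noncomputable def reflGen {B W : Type*} [Group W] {M : CoxeterMatrix B} (cs : CoxeterSystem M W)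
    (i : B) : Function.End (W × ZMod 2) :=
  fun p => (cs.simple i * p.1 * cs.simple i, p.2 + if p.1 = cs.simple i then 1 else 0)

section
variable {B W : Type*} [Group W] {M : CoxeterMatrix B} (cs : CoxeterSystem M W)

open Classical in
theorem reflGen_pow (i j : B) (k : ℕ) (t : W) (e : ZMod 2) :
    ((reflGen cs i * reflGen cs j) ^ k) (t, e) =
      ((cs.simple i * cs.simple j) ^ k * t * ((cs.simple i * cs.simple j) ^ k)⁻¹,
        e + ∑ n ∈ Finset.range (2 * k),
          if t = cs.simple j * (cs.simple i * cs.simple j) ^ n then 1 else 0) := by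
  have hb : cs.simple j * cs.simple j = 1 := cs.simple_mul_simple_self j
  have hai : (cs.simple i)⁻¹ = cs.simple i := cs.inv_simple i
  have hbi : (cs.simple j)⁻¹ = cs.simple j := cs.inv_simple j
  induction k with
  | zero => simp; rfl
  | succ k ih =>
    rw [pow_succ']
    change (reflGen cs i) ((reflGen cs j) (((reflGen cs i * reflGen cs j) ^ k) (t, e))) = _
    rw [ih]
    simp only [reflGen]
    obtain ⟨e1, e2⟩ := dihedral_aux (cs.simple i) (cs.simple j) t hb hai hbi k
    ext1
    · simp only [pow_succ', mul_inv_rev, hai, hbi, mul_assoc]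
    · rw [show 2 * (k + 1) = 2 * k + 1 + 1 by ring, Finset.sum_range_succ, Finset.sum_range_succ]
      simp only [e1, e2, add_assoc]

theorem reflGen_liftable : M.IsLiftable (reflGen cs) := by
  classical
  intro i j
  funext ⟨t, e⟩
  rw [reflGen_pow, two_mul, Finset.sum_range_add]
  simp only [pow_add, cs.simple_mul_simple_pow, one_mul, CharTwo.add_self_eq_zero]
  simp
  rfl

open Classical in
theorem lift_wordProd (ω : List B) (t : W) (e : ZMod 2) :
    (cs.lift ⟨reflGen cs, reflGen_liftable cs⟩ (cs.wordProd ω)) (t, e) =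
      (cs.wordProd ω * t * (cs.wordProd ω)⁻¹, e + ((cs.rightInvSeq ω).count t : ZMod 2)) := by
  induction ω with
  | nil => simp; rfl
  | cons i ω ih =>
    rw [cs.wordProd_cons, map_mul]
    change (cs.lift ⟨reflGen cs, reflGen_liftable cs⟩ (cs.simple i))
      ((cs.lift ⟨reflGen cs, reflGen_liftable cs⟩ (cs.wordProd ω)) (t, e)) = _
    rw [ih, cs.lift_apply_simple]
    have e1 : (cs.wordProd ω * t * (cs.wordProd ω)⁻¹ = cs.simple i) ↔
        (cs.wordProd ω)⁻¹ * cs.simple i * cs.wordProd ω = t := by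
      rw [mul_inv_eq_iff_eq_mul, ← eq_inv_mul_iff_mul_eq, mul_assoc, eq_comm]
    simp only [reflGen, CoxeterSystem.rightInvSeq, List.count_cons, e1, beq_iff_eq]
    ext1
    · simp [mul_assoc]
    · push_cast
      simp [add_assoc]

open Classical in
theorem count_leftInvSeq (ω ω' : List B) (h : cs.wordProd ω = cs.wordProd ω') (t : W) :
    ((cs.leftInvSeq ω).count t : ZMod 2) = (cs.leftInvSeq ω').count t := by
  have h1 := lift_wordProd cs ω.reverse t 0
  have h2 := lift_wordProd cs ω'.reverse t 0
  rw [cs.wordProd_reverse, cs.rightInvSeq_reverse, List.count_reverse] at h1 h2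
  rw [h, h2] at h1
  simpa using (congrArg Prod.snd h1).symm

open Classical in
theorem count_eq (ω : List B) (i : B) :
    ((cs.leftInvSeq ω).count (cs.simple i) : ZMod 2) =
      if cs.simple i ∈ coxRecoil cs (cs.wordProd ω) then 1 else 0 := by
  split_ifs with h
  · obtain ⟨τ, hτ, hw⟩ := cs.exists_isReduced (cs.simple i * cs.wordProd ω)
    have hp : cs.wordProd ω = cs.wordProd (i :: τ) := by
      rw [cs.wordProd_cons, ← hw, cs.simple_mul_simple_cancel_left]
    have hr : cs.IsReduced (i :: τ) := by
      have := h.2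
      rw [hw, hτ.eq, hp] at this
      unfold CoxeterSystem.IsReduced
      simp [← this]
    rw [count_leftInvSeq cs _ _ hp,
      List.count_eq_one_of_mem hr.nodup_leftInvSeq (by simp [CoxeterSystem.leftInvSeq])]
    simp
  · obtain ⟨τ, hτ, hw⟩ := cs.exists_isReduced (cs.wordProd ω)
    rw [count_leftInvSeq cs _ _ hw, List.count_eq_zero_of_not_mem]
    · simp
    · intro hm
      apply h
      have := (cs.isLeftInversion_of_mem_leftInvSeq hτ hm).2
      rw [hw]
      exact ⟨⟨i, rfl⟩, cs.isLeftDescent_iff.1 this⟩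

theorem recoil_ne (v : W) (i : B) (h : coxRecoil cs (v * cs.simple i) ≠ coxRecoil cs v) :
    ∃ j, v * cs.simple i = cs.simple j * v := by
  classical
  by_contra! hc
  apply h
  ext t
  by_cases ht : t ∈ Set.range cs.simple
  swap
  · exact ⟨fun h => absurd h.1 ht, fun h => absurd h.1 ht⟩
  obtain ⟨j, rfl⟩ := ht
  obtain ⟨ω, -, rfl⟩ := cs.exists_isReduced v
  have h1 := count_eq cs ω j
  have h2 := count_eq cs (ω.concat i) j
  rw [cs.leftInvSeq_concat, cs.wordProd_concat, List.concat_eq_append, List.count_append,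
    List.count_singleton, if_neg, add_zero, h1] at h2
  · split_ifs at h2 <;> simp_all
  · simp only [beq_iff_eq]
    intro he
    exact hc j (by rw [← he]; simp)

theorem recoil_simple_mul (v : W) (j : B) :
    coxRecoil cs (cs.simple j * v) ≠ coxRecoil cs v := by
  intro h
  have h1 : cs.simple j ∈ coxRecoil cs (cs.simple j * v) ↔ cs.simple j ∈ coxRecoil cs v := by
    rw [h]
  simp only [coxRecoil, Set.mem_setOf_eq, Set.mem_range_self, true_and,
    cs.simple_mul_simple_cancel_left] at h1
  have := cs.length_simple_mul v j
  omega

end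

theorem statement11 {B W : Type*} [Group W] {M : CoxeterMatrix B} (cs : CoxeterSystem M W)
    (w u v s : W) (hs : s ∈ Set.range cs.simple) (hfac : w = u * v)
    (hrec : coxRecoil cs (w * s) = coxRecoil cs w) :
    ∃! uv : W × W, uv.1 * uv.2 = w * s ∧
      Xor'
        (uv.1 = u ∧ v⁻¹ * uv.2 ∈ Set.range cs.simple ∧ coxRecoil cs uv.2 = coxRecoil cs v)
        (uv.2 = v ∧ u⁻¹ * uv.1 ∈ Set.range cs.simple ∧
          coxRecoil cs uv.1 = coxRecoil cs u) := by
  obtain ⟨i, rfl⟩ := hs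
  subst hfac
  have hne : ∀ (x : W) (j : B), x * cs.simple j ≠ x := by
    intro x j h
    apply cs.length_mul_simple_ne x j
    rw [h]
  by_cases h : coxRecoil cs (v * cs.simple i) = coxRecoil cs v
  · refine ⟨(u, v * cs.simple i), ⟨by simp [mul_assoc], Or.inl ⟨⟨rfl, ⟨i, by simp⟩, h⟩, ?_⟩⟩, ?_⟩
    · rintro ⟨h1, -⟩
      exact hne _ _ h1
    · rintro ⟨x, y⟩ ⟨hxy, ⟨⟨h1, -⟩, -⟩ | ⟨⟨h1, ⟨j, hj⟩, -⟩, -⟩⟩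
      · simp only at h1 hxy
        subst h1
        rw [mul_assoc, mul_right_inj] at hxy
        rw [hxy]
      · exfalso
        simp only at h1 hxy hj
        subst h1
        have hx : x = u * cs.simple j := by rw [hj]; simp
        rw [hx, mul_assoc, mul_assoc, mul_right_inj] at hxy
        rw [← hxy] at h
        exact recoil_simple_mul cs _ _ h
  · obtain ⟨j, hj⟩ := recoil_ne cs v i h
    have hu : coxRecoil cs (u * cs.simple j) = coxRecoil cs u := by
      by_contra hu
      obtain ⟨k, hk⟩ := recoil_ne cs u j hu
      rw [mul_assoc, hj, ← mul_assoc, hk, mul_assoc] at hrec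
      exact recoil_simple_mul cs _ _ hrec
    refine ⟨(u * cs.simple j, v), ⟨by simp [mul_assoc, hj],
      Or.inr ⟨⟨rfl, ⟨j, by simp⟩, hu⟩, ?_⟩⟩, ?_⟩
    · rintro ⟨h1, -⟩
      exact hne _ _ h1
    · rintro ⟨x, y⟩ ⟨hxy, ⟨⟨h1, -, h3⟩, -⟩ | ⟨⟨h1, -⟩, -⟩⟩
      · exfalso
        simp only at h1 hxy h3
        subst h1
        rw [mul_assoc, mul_right_inj] at hxy
        rw [hxy] at h3
        exact h h3
      · simp only at h1 hxy
        subst h1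
        rw [mul_assoc, hj, ← mul_assoc, mul_left_inj] at hxy
        rw [hxy]
end

section
/- Let (W,S) be a Coxeter system with W finite, and let I, J ⊆ S. If w, w′ ∈ W satisfy R(w) = R(w′), then the number of pairs (u,v) ∈ W × W with uv = w, R(u) = I and R(v) = J equals the number of pairs (u,v) with uv = w′, R(u) = I and R(v) = J. Consequently, setting Y_I = Σ_{w : R(w)=I} w in ℚ[W], there exist nonnegative integers a_{IJK} (K ⊆ S) such that Y_I · Y_J = Σ_K a_{IJK} Y_K. -/
open scoped Classical in
/-- `Y_I`: the sum, in `ℚ[W]`, of all elements with recoil set `I`. -/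
noncomputable def coxY {B W : Type*} [Group W] [Fintype W] {M : CoxeterMatrix B}
    (cs : CoxeterSystem M W) (I : Set W) : MonoidAlgebra ℚ W :=
  ∑ w : W, if coxRecoil cs w = I then MonoidAlgebra.of ℚ W w else 0

namespace CoxAux
open CoxeterSystem
variable {B W : Type*} [Group W] {M : CoxeterMatrix B} (cs : CoxeterSystem M W)

open scoped Classical in
noncomputable def phi (i : B) : Equiv.Perm (W × ZMod 2) where
  toFun p := (cs.simple i * p.1 * cs.simple i, p.2 + if p.1 = cs.simple i then 1 else 0)
  invFun p := (cs.simple i * p.1 * cs.simple i, p.2 + if p.1 = cs.simple i then 1 else 0)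
  left_inv p := by
    obtain ⟨t, e⟩ := p
    have h : cs.simple i * t * cs.simple i = cs.simple i ↔ t = cs.simple i := by
      constructor
      · intro h
        have := congrArg (fun x => cs.simple i * x * cs.simple i) h
        simpa [mul_assoc] using this
      · rintro rfl; simp
    ext
    · simp [mul_assoc]
    · simp only [h]
      split_ifs
      · rw [add_assoc, show (1 + 1 : ZMod 2) = 0 from rfl, add_zero]
      · simp
  right_inv p := by
    obtain ⟨t, e⟩ := p
    have h : cs.simple i * t * cs.simple i = cs.simple i ↔ t = cs.simple i := by
      constructor
      · intro h
        have := congrArg (fun x => cs.simple i * x * cs.simple i) h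
        simpa [mul_assoc] using this
      · rintro rfl; simp
    ext
    · simp [mul_assoc]
    · simp only [h]
      split_ifs
      · rw [add_assoc, show (1 + 1 : ZMod 2) = 0 from rfl, add_zero]
      · simp

open scoped Classical in
lemma phi_apply (i : B) (t : W) (e : ZMod 2) : phi cs i (t, e) =
    (cs.simple i * t * cs.simple i, e + if t = cs.simple i then 1 else 0) := rfl

lemma sj_pow (i j : B) (k : ℕ) :
    cs.simple j * (cs.simple i * cs.simple j) ^ k =
      ((cs.simple i * cs.simple j)⁻¹) ^ k * cs.simple j := by
  induction k with
  | zero => simp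
  | succ k ih =>
    rw [pow_succ, ← mul_assoc, ih, pow_succ]
    simp [mul_assoc]

open scoped Classical in
lemma phi_pow (i j : B) (n : ℕ) (t : W) (e : ZMod 2) :
    ((phi cs i * phi cs j) ^ n) (t, e) =
    ((cs.simple i * cs.simple j) ^ n * t * ((cs.simple i * cs.simple j) ^ n)⁻¹,
      e + ∑ k ∈ Finset.range (2 * n),
        if t = ((cs.simple i * cs.simple j)⁻¹) ^ k * cs.simple j then 1 else 0) := by
  induction n with
  | zero => simp
  | succ n ih =>
    rw [pow_succ', Equiv.Perm.mul_apply, ih, Equiv.Perm.mul_apply, phi_apply, phi_apply]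
    have key := sj_pow cs i j n
    set p := cs.simple i * cs.simple j with hp
    have h1 : p ^ n * t * (p ^ n)⁻¹ = cs.simple j ↔ t = p⁻¹ ^ (2 * n) * cs.simple j := by
      rw [mul_inv_eq_iff_eq_mul, key, ← eq_inv_mul_iff_mul_eq, two_mul, pow_add, inv_pow,
        mul_assoc]
    have h2 : cs.simple j * (p ^ n * t * (p ^ n)⁻¹) * cs.simple j = cs.simple i ↔
        t = p⁻¹ ^ (2 * n + 1) * cs.simple j := by
      have e1 : p⁻¹ = cs.simple j * cs.simple i := by simp [hp]
      have : p⁻¹ ^ (2 * n + 1) * cs.simple j = p⁻¹ ^ n * (p⁻¹ * (cs.simple j * p ^ n)) := by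
        rw [key, two_mul, add_assoc, pow_add, pow_succ']; simp only [mul_assoc]
      rw [this, inv_pow, eq_inv_mul_iff_mul_eq, ← mul_assoc, ← mul_inv_eq_iff_eq_mul, e1]
      have e2 : cs.simple j * (p ^ n * t) * (p ^ n)⁻¹ * cs.simple j =
          cs.simple j * (p ^ n * t * (cs.simple j * p ^ n)⁻¹) := by simp [mul_assoc]
      rw [e2]
      constructor
      · intro h
        rw [← h]; simp
      · intro h
        rw [h]; simp
    rw [show 2 * (n + 1) = 2 * n + 1 + 1 by ring, Finset.sum_range_succ, Finset.sum_range_succ]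
    simp only [h1, h2]
    ext
    · simp [hp, pow_succ', mul_assoc]
    · simp only [add_assoc]

lemma phi_liftable : M.IsLiftable (phi cs) := by
  classical
  intro i j
  ext1 ⟨t, e⟩
  rw [phi_pow]
  have hm : (cs.simple i * cs.simple j) ^ M i j = 1 := by simp
  have : (∑ k ∈ Finset.range (2 * M i j),
        if t = ((cs.simple i * cs.simple j)⁻¹) ^ k * cs.simple j then (1 : ZMod 2) else 0) = 0 := by
    rw [two_mul, Finset.sum_range_add]
    simp only [pow_add, inv_pow, hm, inv_one, one_mul]
    exact CharTwo.add_self_eq_zero _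
  rw [this, hm]
  simp

noncomputable def Phi : W →* Equiv.Perm (W × ZMod 2) := cs.lift ⟨phi cs, phi_liftable cs⟩

open scoped Classical in
lemma Phi_word (ω : List B) (t : W) (e : ZMod 2) :
    Phi cs (cs.wordProd ω) (t, e) =
      (cs.wordProd ω * t * (cs.wordProd ω)⁻¹, e + ((cs.rightInvSeq ω).count t : ℕ)) := by
  induction ω with
  | nil => simp
  | cons i ω ih =>
    rw [cs.wordProd_cons, map_mul, Equiv.Perm.mul_apply, ih]
    have : Phi cs (cs.simple i) = phi cs i := by
      simp [Phi]
    rw [this, phi_apply]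
    ext
    · simp [mul_assoc]
    · have h : cs.wordProd ω * t * (cs.wordProd ω)⁻¹ = cs.simple i ↔
        (cs.wordProd ω)⁻¹ * cs.simple i * cs.wordProd ω = t := by
        rw [mul_inv_eq_iff_eq_mul, mul_assoc, inv_mul_eq_iff_eq_mul, eq_comm]
      simp only [h, rightInvSeq, List.count_cons, beq_iff_eq, Nat.cast_add, Nat.cast_ite,
        Nat.cast_one, Nat.cast_zero, add_assoc]

lemma exchange_right (ω : List B) (i : B)
    (h : cs.length (cs.wordProd ω * cs.simple i) < cs.length (cs.wordProd ω)) :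
    ∃ j < ω.length, cs.wordProd ω * cs.simple i = cs.wordProd (ω.eraseIdx j) := by
  classical
  obtain ⟨ω', hr, hω'⟩ := cs.exists_isReduced (cs.wordProd ω * cs.simple i)
  have hw : cs.wordProd (ω' ++ [i]) = cs.wordProd ω := by
    rw [cs.wordProd_append, ← hω']; simp [mul_assoc]
  have hred : cs.IsReduced (ω' ++ [i]) := by
    have h1 := cs.length_mul_simple (cs.wordProd ω) i
    unfold CoxeterSystem.IsReduced at *
    rw [hw, List.length_append, List.length_singleton, ← hr, ← hω']
    omega
  have hmem : cs.simple i ∈ cs.rightInvSeq (ω' ++ [i]) := by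
    rw [← List.concat_eq_append, cs.rightInvSeq_concat]; simp
  have hc : (cs.rightInvSeq (ω' ++ [i])).count (cs.simple i) = 1 :=
    List.count_eq_one_of_mem hred.nodup_rightInvSeq hmem
  have e1 := Phi_word cs (ω' ++ [i]) (cs.simple i) 0
  rw [hw, Phi_word cs ω, hc] at e1
  have e2 := congrArg Prod.snd e1
  have hm : cs.simple i ∈ cs.rightInvSeq ω := by
    by_contra hn
    rw [List.count_eq_zero_of_not_mem hn] at e2
    simp at e2
  obtain ⟨j, hj, hjj⟩ := List.getElem_of_mem hm
  refine ⟨j, by simpa using hj, ?_⟩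
  rw [← cs.wordProd_mul_getD_rightInvSeq, List.getD_eq_getElem _ _ hj, hjj]

lemma exchange_left (ω : List B) (i : B)
    (h : cs.length (cs.simple i * cs.wordProd ω) < cs.length (cs.wordProd ω)) :
    ∃ j < ω.length, cs.simple i * cs.wordProd ω = cs.wordProd (ω.eraseIdx j) := by
  classical
  have h' : cs.length (cs.wordProd ω.reverse * cs.simple i) < cs.length (cs.wordProd ω.reverse) := by
    rw [cs.wordProd_reverse, cs.length_inv, ← cs.length_inv]; simpa using h
  obtain ⟨j, hj, e⟩ := exchange_right cs ω.reverse i h'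
  rw [List.length_reverse] at hj
  refine ⟨ω.length - 1 - j, by omega, ?_⟩
  rw [← inv_inj, ← cs.wordProd_reverse (ω.eraseIdx _)]
  have e' : (ω.eraseIdx (ω.length - 1 - j)).reverse = ω.reverse.eraseIdx j := by
    rw [List.eraseIdx_eq_take_drop_succ, List.eraseIdx_eq_take_drop_succ]
    rw [List.reverse_append, List.take_reverse, List.drop_reverse]
    congr 3 <;> omega
  rw [e', ← e, cs.wordProd_reverse]
  simp

/-- exchange for a product of two elements -/
lemma exchange_mul (x z : W) (i : B)
    (h : cs.length (cs.simple i * (x * z)) < cs.length (x * z))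
    (hx : cs.length x < cs.length (cs.simple i * x)) :
    cs.length (x⁻¹ * (cs.simple i * (x * z))) < cs.length z := by
  obtain ⟨a, ha, rfl⟩ := cs.exists_isReduced x
  obtain ⟨b, hb, rfl⟩ := cs.exists_isReduced z
  rw [← cs.wordProd_append] at h
  obtain ⟨j, hj, e⟩ := exchange_left cs _ i h
  rw [List.length_append] at hj
  rw [cs.wordProd_append] at e
  rw [e]
  by_cases hja : j < a.length
  · exfalso
    rw [List.eraseIdx_append_of_lt_length hja, cs.wordProd_append, ← mul_assoc,
      mul_left_inj] at e
    have := cs.length_wordProd_le (a.eraseIdx j)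
    rw [← e] at this
    have h3 := List.length_eraseIdx_le a j
    rw [ha.eq] at hx
    omega
  · push Not at hja
    rw [List.eraseIdx_append_of_length_le hja, cs.wordProd_append, inv_mul_cancel_left, hb.eq]
    refine (cs.length_wordProd_le _).trans_lt ?_
    rw [List.length_eraseIdx_of_lt (by omega)]
    omega

lemma mem_recoil {w : W} {i : B} : cs.simple i ∈ coxRecoil cs w ↔
    cs.length (cs.simple i * w) < cs.length w := by
  have := cs.length_simple_mul w i
  simp only [coxRecoil, Set.mem_ofPred_eq, Set.mem_range_self, true_and]
  omega

lemma conj_of_mem (v : W) (i j : B) (h1 : cs.simple i ∈ coxRecoil cs v)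
    (h2 : cs.simple i ∉ coxRecoil cs (v * cs.simple j)) :
    cs.simple i * v = v * cs.simple j := by
  rw [mem_recoil] at h1 h2
  have a1 := cs.length_simple_mul v i
  have a2 := cs.length_mul_simple v j
  have a3 := cs.length_simple_mul (v * cs.simple j) i
  have a4 := cs.length_mul_simple (cs.simple i * v) j
  rw [mul_assoc] at a4
  have := exchange_mul cs (v * cs.simple j) (cs.simple j) i (by simpa [mul_assoc] using h1)
    (by omega)
  rw [cs.length_simple, Nat.lt_one_iff, cs.length_eq_zero_iff] at this
  rw [inv_mul_eq_one] at this
  rw [this]; simp [mul_assoc]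

lemma conj_of_ne (v : W) (j : B) (h : coxRecoil cs (v * cs.simple j) ≠ coxRecoil cs v) :
    ∃ i, cs.simple i * v = v * cs.simple j ∧
      (cs.simple i ∈ coxRecoil cs v ∨ cs.simple i ∈ coxRecoil cs (v * cs.simple j)) := by
  by_contra hn
  push Not at hn
  apply h
  ext s
  constructor
  · rintro hs
    obtain ⟨i, rfl⟩ := hs.1
    by_contra hc
    have := conj_of_mem cs (v * cs.simple j) i j hs (by simpa [mul_assoc] using hc)
    refine (hn i ?_).2 hs
    rw [← mul_left_inj (cs.simple j), mul_assoc, this]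
  · rintro hs
    obtain ⟨i, rfl⟩ := hs.1
    by_contra hc
    exact (hn i (conj_of_mem cs v i j hs hc)).1 hs

lemma recoil_ne (v : W) (i j : B) (h : cs.simple i * v = v * cs.simple j) :
    coxRecoil cs (v * cs.simple j) ≠ coxRecoil cs v := by
  intro e
  have : cs.simple i ∈ coxRecoil cs (v * cs.simple j) ↔ cs.simple i ∈ coxRecoil cs v := by rw [e]
  rw [mem_recoil, mem_recoil, ← h] at this
  have := cs.length_simple_mul v i
  simp at *
  omega

abbrev Fac (I J : Set W) (w : W) :=
  {p : W × W // p.1 * p.2 = w ∧ coxRecoil cs p.1 = I ∧ coxRecoil cs p.2 = J}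

open scoped Classical in
noncomputable def step (j : B) (p : W × W) : W × W :=
  if coxRecoil cs (p.2 * cs.simple j) = coxRecoil cs p.2 then (p.1, p.2 * cs.simple j)
  else (p.1 * (p.2 * cs.simple j * p.2⁻¹), p.2)

lemma step_step (j : B) (p : W × W) : step cs j (step cs j p) = p := by
  obtain ⟨u, v⟩ := p
  by_cases h : coxRecoil cs (v * cs.simple j) = coxRecoil cs v
  · simp [step, h, mul_assoc]
  · simp [step, h, mul_assoc]

lemma step_mem (I J : Set W) (w : W) (j : B)
    (h : coxRecoil cs (w * cs.simple j) = coxRecoil cs w) (p : W × W)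
    (hp : p.1 * p.2 = w ∧ coxRecoil cs p.1 = I ∧ coxRecoil cs p.2 = J) :
    (step cs j p).1 * (step cs j p).2 = w * cs.simple j ∧ coxRecoil cs (step cs j p).1 = I ∧
      coxRecoil cs (step cs j p).2 = J := by
  obtain ⟨u, v⟩ := p
  obtain ⟨rfl, rfl, rfl⟩ := hp
  by_cases hv : coxRecoil cs (v * cs.simple j) = coxRecoil cs v
  · simp [step, hv, mul_assoc]
  · simp only [step, hv, if_false]
    refine ⟨by simp [mul_assoc], ?_, trivial⟩
    obtain ⟨i, hi, -⟩ := conj_of_ne cs v j hv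
    rw [← hi, mul_inv_cancel_right]
    by_contra hu
    obtain ⟨k, hk, -⟩ := conj_of_ne cs u i hu
    refine recoil_ne cs (u * v) k j ?_ h
    rw [← mul_assoc, hk, mul_assoc, hi, mul_assoc]

lemma card_step (I J : Set W) (w : W) (j : B)
    (h : coxRecoil cs (w * cs.simple j) = coxRecoil cs w) :
    Nat.card (Fac cs I J (w * cs.simple j)) = Nat.card (Fac cs I J w) := by
  refine Nat.card_congr ⟨fun p => ⟨step cs j p.1, ?_⟩,
    fun p => ⟨step cs j p.1, step_mem cs I J w j h p.1 p.2⟩, ?_, ?_⟩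
  · have := step_mem cs I J (w * cs.simple j) j (by simpa [mul_assoc] using h.symm) p.1 p.2
    simpa [mul_assoc] using this
  · intro p; simp [step_step]
  · intro p; simp [step_step]

inductive InA (I : Set W) : W → Prop
  | one : InA I 1
  | cons (i : B) (x : W) (hi : cs.simple i ∈ I) (hx : InA I x)
      (hl : cs.length x < cs.length (cs.simple i * x)) : InA I (cs.simple i * x)

lemma prefix_of_InA (I : Set W) (w x : W) (hw : I ⊆ coxRecoil cs w) (hx : InA cs I x) :
    cs.length x + cs.length (x⁻¹ * w) = cs.length w := by
  induction hx with
  | one => simp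
  | cons i x hi hx hl ih =>
    have h1 := (mem_recoil cs).1 (hw hi)
    have := exchange_mul cs x (x⁻¹ * w) i (by simpa using h1) hl
    have h2 := cs.length_simple_mul x i
    have h3 := cs.length_mul_le (cs.simple i * x) ((cs.simple i * x)⁻¹ * w)
    simp only [mul_inv_rev, cs.inv_simple, mul_inv_cancel_left, mul_assoc,
      cs.simple_mul_simple_cancel_left] at *
    omega

lemma InA_of_min (w : W)
    (h : ∀ j, cs.length (w * cs.simple j) < cs.length w →
      coxRecoil cs (w * cs.simple j) ≠ coxRecoil cs w) : InA cs (coxRecoil cs w) w := by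
  by_contra hw
  -- every element of A can be enlarged
  have key : ∀ n, ∃ x, InA cs (coxRecoil cs w) x ∧ n ≤ cs.length x := by
    intro n
    induction n with
    | zero => exact ⟨1, .one, by simp⟩
    | succ n ih =>
      obtain ⟨x, hx, hn⟩ := ih
      have hpre := prefix_of_InA cs _ w x subset_rfl hx
      have hz : x⁻¹ * w ≠ 1 := by
        intro hz
        rw [inv_mul_eq_one] at hz
        exact hw (hz ▸ hx)
      obtain ⟨j, hj⟩ := cs.exists_rightDescent_of_ne_one hz
      unfold IsRightDescent at hj
      have h1 := cs.length_mul_le x (x⁻¹ * w * cs.simple j)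
      rw [← mul_assoc, mul_inv_cancel_left] at h1
      obtain ⟨i, hi, hii⟩ := conj_of_ne cs w j (h j (by omega))
      have hiw : cs.simple i ∈ coxRecoil cs w := by
        rw [mem_recoil, hi]; omega
      have h2 := cs.length_mul_le (cs.simple i * x) (x⁻¹ * w * cs.simple j)
      have e : cs.simple i * x * (x⁻¹ * w * cs.simple j) = w := by
        calc _ = cs.simple i * (w * cs.simple j) := by group
          _ = w := by rw [← hi]; simp
      rw [e] at h2
      have h3 := cs.length_simple_mul x i
      exact ⟨_, .cons i x hiw hx (by omega), by omega⟩
  obtain ⟨x, hx, hn⟩ := key (cs.length w + 1)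
  have := prefix_of_InA cs _ w x subset_rfl hx
  omega

lemma InA_unique (w w' : W) (h : coxRecoil cs w = coxRecoil cs w')
    (hw : InA cs (coxRecoil cs w) w) (hw' : InA cs (coxRecoil cs w') w') : w = w' := by
  have h1 := prefix_of_InA cs _ w' w h.subset hw
  have h2 := prefix_of_InA cs _ w w' h.symm.subset hw'
  have : cs.length (w⁻¹ * w') = 0 := by omega
  rwa [cs.length_eq_zero_iff, inv_mul_eq_one] at this

lemma exists_min (I J : Set W) (n : ℕ) : ∀ w : W, cs.length w ≤ n →
    ∃ x, coxRecoil cs x = coxRecoil cs w ∧ InA cs (coxRecoil cs x) x ∧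
    Nat.card (Fac cs I J x) = Nat.card (Fac cs I J w) := by
  induction n with
  | zero =>
    intro w hw
    obtain rfl : w = 1 := by rw [← cs.length_eq_zero_iff]; omega
    exact ⟨1, rfl, .one, rfl⟩
  | succ n ih =>
    intro w hw
    by_cases h : ∀ j, cs.length (w * cs.simple j) < cs.length w →
      coxRecoil cs (w * cs.simple j) ≠ coxRecoil cs w
    · exact ⟨w, rfl, InA_of_min cs w h, rfl⟩
    · push Not at h
      obtain ⟨j, hj, e⟩ := h
      obtain ⟨x, h1, h2, h3⟩ := ih (w * cs.simple j) (by omega)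
      exact ⟨x, h1.trans e, h2, h3.trans (card_step cs I J w j e)⟩

lemma card_eq (I J : Set W) (w w' : W) (h : coxRecoil cs w = coxRecoil cs w') :
    Nat.card (Fac cs I J w) = Nat.card (Fac cs I J w') := by
  obtain ⟨x, h1, h2, h3⟩ := exists_min cs I J _ w le_rfl
  obtain ⟨y, k1, k2, k3⟩ := exists_min cs I J _ w' le_rfl
  rw [← h3, ← k3, InA_unique cs x y (h1.trans (h.trans k1.symm)) h2 k2]

end CoxAux

open scoped Classical in
/-- In a finite Coxeter group, the number of factorizations `w = uv` with prescribed recoil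
sets of the factors depends only on the recoil set of `w`; consequently the product of two
descent-class sums is a nonnegative-integer combination of descent-class sums. -/
theorem statement12 {B W : Type*} [Group W] [Fintype W] {M : CoxeterMatrix B}
    (cs : CoxeterSystem M W) (I J : Set W)
    (hI : I ⊆ Set.range cs.simple) (hJ : J ⊆ Set.range cs.simple) :
    (∀ w w' : W, coxRecoil cs w = coxRecoil cs w' →
      Nat.card {p : W × W // p.1 * p.2 = w ∧ coxRecoil cs p.1 = I ∧ coxRecoil cs p.2 = J} =
      Nat.card {p : W × W // p.1 * p.2 = w' ∧ coxRecoil cs p.1 = I ∧ coxRecoil cs p.2 = J}) ∧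
    (∃ a : Set W → ℕ, coxY cs I * coxY cs J = ∑ K : Set W, (a K : ℚ) • coxY cs K) := by
  have main : ∀ w w' : W, coxRecoil cs w = coxRecoil cs w' →
      Nat.card {p : W × W // p.1 * p.2 = w ∧ coxRecoil cs p.1 = I ∧ coxRecoil cs p.2 = J} =
      Nat.card {p : W × W // p.1 * p.2 = w' ∧ coxRecoil cs p.1 = I ∧ coxRecoil cs p.2 = J} :=
    fun w w' h => CoxAux.card_eq cs I J w w' h
  refine ⟨main, fun K => if h : ∃ w, coxRecoil cs w = K then
    Nat.card (CoxAux.Fac cs I J h.choose) else 0, ?_⟩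
  have hR : ∀ w : W, (if h : ∃ w', coxRecoil cs w' = coxRecoil cs w then
      Nat.card (CoxAux.Fac cs I J h.choose) else 0) = Nat.card (CoxAux.Fac cs I J w) := by
    intro w
    have h : ∃ w', coxRecoil cs w' = coxRecoil cs w := ⟨w, rfl⟩
    rw [dif_pos h]
    exact main _ _ h.choose_spec
  have hrhs : ∀ a : Set W → ℕ, ∑ K : Set W, (a K : ℚ) • coxY cs K =
      ∑ w : W, (a (coxRecoil cs w) : ℚ) • MonoidAlgebra.of ℚ W w := by
    intro a
    simp only [coxY, Finset.smul_sum]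
    rw [Finset.sum_comm]
    refine Finset.sum_congr rfl fun w _ => ?_
    simp only [smul_ite, smul_zero, Finset.sum_ite_eq, Finset.mem_univ, if_true]
  rw [hrhs]
  simp only [hR]
  have hcard : ∀ w : W, (Nat.card (CoxAux.Fac cs I J w) : ℚ) =
      ∑ p : W × W, if p.1 * p.2 = w ∧ coxRecoil cs p.1 = I ∧ coxRecoil cs p.2 = J
        then 1 else 0 := by
    intro w
    rw [Finset.sum_boole, Nat.card_eq_fintype_card, Fintype.card_subtype]
  simp only [hcard, Finset.sum_smul]
  rw [Finset.sum_comm]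
  simp only [coxY, Finset.sum_mul_sum, ite_smul, one_smul, zero_smul]
  rw [← Finset.univ_product_univ, Finset.sum_product]
  refine Finset.sum_congr rfl fun u _ => Finset.sum_congr rfl fun v _ => ?_
  by_cases h1 : coxRecoil cs u = I <;> by_cases h2 : coxRecoil cs v = J <;>
    simp [h1, h2, MonoidAlgebra.single_mul_single]
end

section
/- Let n be a positive integer, let σ ∈ S_n and let i ∈ {1,…,n−2}. Then the six permutations σ, σs_i, σs_is_{i+1}, σs_is_{i+1}s_i, σs_{i+1}s_i, σs_{i+1} all have the same recoil set as σ if and only if |σ(i) − σ(i+1)| ≥ 2, |σ(i+1) − σ(i+2)| ≥ 2, and |σ(i) − σ(i+2)| ≥ 2. -/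
theorem mem_recoil_aux {n : ℕ} (σ : Equiv.Perm (Fin n)) (p q : Fin n)
    (h : (σ p : ℕ) + 1 = σ q) (τ : Equiv.Perm (Fin n)) :
    σ p ∈ recoilSet (σ * τ) ↔ τ⁻¹ q < τ⁻¹ p := by
  have hlt : (σ p : ℕ) + 1 < n := by rw [h]; exact (σ q).2
  have e : (⟨(σ p : ℕ) + 1, hlt⟩ : Fin n) = σ q := Fin.ext h
  simp only [recoilSet, Finset.mem_filter, Finset.mem_univ, true_and, mul_inv_rev,
    Equiv.Perm.mul_apply]
  constructor
  · rintro ⟨_, h2⟩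
    rw [e] at h2
    simpa using h2
  · intro h2
    refine ⟨hlt, ?_⟩
    rw [e]
    simpa using h2

def blockPerm {n : ℕ} (i : ℕ) (τ : Equiv.Perm (Fin n)) : Prop :=
  ∀ p : Fin n, (((p : ℕ) < i ∨ i + 2 < (p : ℕ)) ∧ τ p = p) ∨
    (i ≤ (p : ℕ) ∧ (p : ℕ) ≤ i + 2 ∧ i ≤ (τ p : ℕ) ∧ (τ p : ℕ) ≤ i + 2)

theorem blockPerm_mul {n : ℕ} {i : ℕ} {τ ρ : Equiv.Perm (Fin n)}
    (h1 : blockPerm i τ) (h2 : blockPerm i ρ) : blockPerm i (τ * ρ) := by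
  intro p
  rw [Equiv.Perm.mul_apply]
  rcases h2 p with ⟨a, b⟩ | ⟨a, b, c, d⟩
  · rw [b]; exact h1 p
  · rcases h1 (ρ p) with ⟨a', b'⟩ | ⟨a', b', c', d'⟩
    · omega
    · exact Or.inr ⟨a, b, c', d'⟩

theorem blockPerm_swap {n : ℕ} {i : ℕ} (a b : Fin n) (ha : i ≤ (a : ℕ)) (ha' : (a : ℕ) ≤ i + 2)
    (hb : i ≤ (b : ℕ)) (hb' : (b : ℕ) ≤ i + 2) : blockPerm i (Equiv.swap a b) := by
  intro p
  rw [Equiv.swap_apply_def]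
  split_ifs with h1 h2
  · subst h1; right; omega
  · subst h2; right; omega
  · simp only [and_true]; omega

theorem recoil_block {n : ℕ} {i : ℕ} (σ τ : Equiv.Perm (Fin n)) (hτ : blockPerm i τ⁻¹)
    (hs : ∀ p q : Fin n, i ≤ (p : ℕ) → (p : ℕ) ≤ i + 2 → i ≤ (q : ℕ) → (q : ℕ) ≤ i + 2 →
      (σ p : ℕ) + 1 ≠ σ q) : recoilSet (σ * τ) = recoilSet σ := by
  ext x
  obtain ⟨p, rfl⟩ := σ.surjective x
  by_cases hlt : (σ p : ℕ) + 1 < n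
  · obtain ⟨q, hq⟩ := σ.surjective ⟨(σ p : ℕ) + 1, hlt⟩
    have h : (σ p : ℕ) + 1 = σ q := by rw [hq]
    have h1 := mem_recoil_aux σ p q h 1
    rw [mul_one] at h1
    rw [mem_recoil_aux σ p q h τ, h1]
    simp only [inv_one, Equiv.Perm.one_apply, Fin.lt_def]
    have := hs p q
    rcases hτ p with ⟨a, b⟩ | ⟨a, b, c, d⟩ <;> rcases hτ q with ⟨a', b'⟩ | ⟨a', b', c', d'⟩
    · rw [b, b']
    · rw [b]; omega
    · rw [b']; omega
    · exact absurd h (this a b a' b')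
  · simp [recoilSet, hlt]

/-- The six permutations `σ, σs_i, σs_is_{i+1}, σs_is_{i+1}s_i, σs_{i+1}s_i, σs_{i+1}` all
have the same recoil set iff `|σ(i)−σ(i+1)| ≥ 2`, `|σ(i+1)−σ(i+2)| ≥ 2` and
`|σ(i)−σ(i+2)| ≥ 2`. -/
theorem statement13 (n : ℕ) (hn : 0 < n) (σ : Equiv.Perm (Fin n)) (i : ℕ)
    (hi : i + 2 < n) :
    let s₁ : Equiv.Perm (Fin n) := Equiv.swap ⟨i, by omega⟩ ⟨i + 1, by omega⟩
    let s₂ : Equiv.Perm (Fin n) := Equiv.swap ⟨i + 1, by omega⟩ ⟨i + 2, hi⟩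
    (recoilSet (σ * s₁) = recoilSet σ ∧
     recoilSet (σ * s₁ * s₂) = recoilSet σ ∧
     recoilSet (σ * s₁ * s₂ * s₁) = recoilSet σ ∧
     recoilSet (σ * s₂ * s₁) = recoilSet σ ∧
     recoilSet (σ * s₂) = recoilSet σ) ↔
    (2 ≤ |((σ ⟨i, by omega⟩ : ℕ) : ℤ) - ((σ ⟨i + 1, by omega⟩ : ℕ) : ℤ)| ∧
     2 ≤ |((σ ⟨i + 1, by omega⟩ : ℕ) : ℤ) - ((σ ⟨i + 2, hi⟩ : ℕ) : ℤ)| ∧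
     2 ≤ |((σ ⟨i, by omega⟩ : ℕ) : ℤ) - ((σ ⟨i + 2, hi⟩ : ℕ) : ℤ)|) := by
  intro s₁ s₂
  have hA : blockPerm i s₁ := blockPerm_swap _ _ (by simp) (by simp) (by simp) (by simp)
  have hB : blockPerm i s₂ := blockPerm_swap _ _ (by simp) (by simp) (by simp) (by simp)
  have iA : s₁⁻¹ = s₁ := Equiv.swap_inv _ _
  have iB : s₂⁻¹ = s₂ := Equiv.swap_inv _ _
  constructor
  · rintro ⟨-, -, h, -, -⟩
    have key : ∀ p q : Fin n, (σ p : ℕ) + 1 = σ q →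
        ((s₁ (s₂ (s₁ q)) < s₁ (s₂ (s₁ p))) ↔ q < p) := by
      intro p q hpq
      have h1 := mem_recoil_aux σ p q hpq 1
      have h2 := mem_recoil_aux σ p q hpq (s₁ * s₂ * s₁)
      rw [mul_one, ← h] at h1
      rw [← mul_assoc, ← mul_assoc, h1] at h2
      simpa [iA, iB] using h2.symm
    have e0 : s₁ (s₂ (s₁ ⟨i, by omega⟩)) = ⟨i + 2, hi⟩ := by
      simp [s₁, s₂, Equiv.swap_apply_def]
    have e1 : s₁ (s₂ (s₁ ⟨i + 1, by omega⟩)) = ⟨i + 1, by omega⟩ := by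
      simp [s₁, s₂, Equiv.swap_apply_def]
    have e2 : s₁ (s₂ (s₁ ⟨i + 2, hi⟩)) = ⟨i, by omega⟩ := by
      simp [s₁, s₂, Equiv.swap_apply_def]
    have two : ∀ p q : Fin n, p ≠ q → (σ p : ℕ) + 1 ≠ σ q → (σ q : ℕ) + 1 ≠ σ p →
        2 ≤ |((σ p : ℕ) : ℤ) - ((σ q : ℕ) : ℤ)| := by
      intro p q hne h1 h2
      have h3 : (σ p : ℕ) ≠ σ q := fun h => hne (σ.injective (Fin.ext h))
      rw [le_abs]; omega
    refine ⟨two _ _ (by simp) ?_ ?_, two _ _ (by simp) ?_ ?_, two _ _ (by simp) ?_ ?_⟩ <;>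
    · intro h'
      have := key _ _ h'
      simp only [e0, e1, e2, Fin.lt_def] at this
      omega
  · rintro ⟨h1, h2, h3⟩
    have hs : ∀ p q : Fin n, i ≤ (p : ℕ) → (p : ℕ) ≤ i + 2 → i ≤ (q : ℕ) → (q : ℕ) ≤ i + 2 →
      (σ p : ℕ) + 1 ≠ σ q := by
      have c : ∀ p : Fin n, i ≤ (p : ℕ) → (p : ℕ) ≤ i + 2 → p = ⟨i, by omega⟩ ∨
          p = ⟨i + 1, by omega⟩ ∨ p = ⟨i + 2, hi⟩ := by
        intro p h h'
        simp only [Fin.ext_iff]; omega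
      intro p q a b a' b'
      rw [le_abs] at h1 h2 h3
      rcases c p a b with rfl | rfl | rfl <;> rcases c q a' b' with rfl | rfl | rfl <;> omega
    simp only [mul_assoc]
    refine ⟨recoil_block _ _ ?_ hs, recoil_block _ _ ?_ hs, recoil_block _ _ ?_ hs,
      recoil_block _ _ ?_ hs, recoil_block _ _ ?_ hs⟩ <;> simp only [mul_inv_rev, iA, iB]
    · exact hA
    · exact blockPerm_mul hB hA
    · exact blockPerm_mul (blockPerm_mul hA hB) hA
    · exact blockPerm_mul hA hB
    · exact hB
end

section
/- Let n be a positive integer, let σ ∈ S_n, let i, j ∈ {1,…,n−1} with |i − j| ≥ 2, and suppose that σ, σs_i, σs_is_j and σs_j all have the same recoil set. Let σ = πρ be a factorization with R(π) = I and R(ρ) = J. Then the unique lift (in the sense that at each step the unique factorization of Proposition on recoils is applied) of the closed path σ — σs_i — σs_is_j — σs_j — σ starting at (π,ρ) is again a closed path, i.e. it returns to (π,ρ). Concretely: either |ρ(i) − ρ(i+1)| ≥ 2 and |ρ(j) − ρ(j+1)| ≥ 2 and the lift is (π,ρ) — (π,ρs_i) — (π,ρs_is_j) — (π,ρs_j)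 — (π,ρ) after identifying factorizations, or the analogous closed lifts obtained by moving one or both steps to the π-coordinate occur; in every case the lift ends at the starting pair (π,ρ). -/
/-- One step of the lift of an edge `σ — σ·τ` (with `τ` a simple transposition) through the
unique factorization of the Proposition on recoils: the pair `q` is a factorization of
`(p.1 * p.2) · τ` obtained from the factorization `p` by moving one coordinate by a simple
transposition while preserving its recoil set and keeping the other coordinate fixed. -/
def LiftStep {n : ℕ} (τ : Equiv.Perm (Fin n))
    (p q : Equiv.Perm (Fin n) × Equiv.Perm (Fin n)) : Prop :=
  q.1 * q.2 = p.1 * p.2 * τ ∧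
    ((q.1 = p.1 ∧ IsSimpleTransposition (p.2⁻¹ * q.2) ∧ recoilSet q.2 = recoilSet p.2) ∨
     (q.2 = p.2 ∧ IsSimpleTransposition (p.1⁻¹ * q.1) ∧ recoilSet q.1 = recoilSet p.1))

theorem recoil_ne_s17 {n : ℕ} (ρ τ : Equiv.Perm (Fin n))
    (hs : IsSimpleTransposition (ρ * τ * ρ⁻¹)) : recoilSet (ρ * τ) ≠ recoilSet ρ := by
  obtain ⟨k, hk, e⟩ := hs
  intro h
  have e1 : ρ * τ = Equiv.swap ⟨k, by omega⟩ ⟨k + 1, hk⟩ * ρ := by rw [← e]; group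
  have e2 := Finset.ext_iff.1 h ⟨k, by omega⟩
  rw [e1] at e2
  simp only [recoilSet, Finset.mem_filter, Finset.mem_univ, true_and, mul_inv_rev,
    Equiv.swap_inv, Equiv.Perm.mul_apply, Equiv.swap_apply_left, Equiv.swap_apply_right,
    hk, exists_true_left] at e2
  rcases lt_trichotomy (ρ⁻¹ ⟨k, by omega⟩) (ρ⁻¹ ⟨k + 1, hk⟩) with h' | h' | h'
  · exact absurd (e2.1 h') (lt_asymm h')
  · have := ρ⁻¹.injective h'
    simp at this
  · exact absurd (e2.2 h') (lt_asymm h')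

theorem liftStep_cases {n : ℕ} (τ π ρ : Equiv.Perm (Fin n))
    (q : Equiv.Perm (Fin n) × Equiv.Perm (Fin n)) (h : LiftStep τ (π, ρ) q) :
    (q = (π, ρ * τ) ∧ ¬ IsSimpleTransposition (ρ * τ * ρ⁻¹)) ∨
    (q = (π * (ρ * τ * ρ⁻¹), ρ) ∧ IsSimpleTransposition (ρ * τ * ρ⁻¹)) := by
  obtain ⟨a, b⟩ := q
  obtain ⟨h0, ⟨h1, _, h3⟩ | ⟨h1, h2, _⟩⟩ := h
  · left
    dsimp only at *
    subst h1
    have hb : b = ρ * τ := by rw [mul_assoc] at h0; exact mul_left_cancel h0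
    subst hb
    exact ⟨rfl, fun hs => recoil_ne_s17 _ _ hs h3⟩
  · right
    dsimp only at *
    subst h1
    have ha : a = π * (b * τ * b⁻¹) := by
      rw [eq_mul_inv_of_mul_eq h0]; group
    subst ha
    rw [inv_mul_cancel_left] at h2
    exact ⟨rfl, h2⟩

theorem loop_closed {n : ℕ} (a b π ρ : Equiv.Perm (Fin n)) (ha : a * a = 1) (hb : b * b = 1)
    (hab : a * b = b * a) (p₁ p₂ p₃ p₄ : Equiv.Perm (Fin n) × Equiv.Perm (Fin n))
    (s1 : LiftStep a (π, ρ) p₁) (s2 : LiftStep b p₁ p₂) (s3 : LiftStep a p₂ p₃)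
    (s4 : LiftStep b p₃ p₄) : p₄ = (π, ρ) := by
  have ca : ∀ x : Equiv.Perm (Fin n), x * a * a = x := fun x => by rw [mul_assoc, ha, mul_one]
  have cb : ∀ x : Equiv.Perm (Fin n), x * b * b = x := fun x => by rw [mul_assoc, hb, mul_one]
  have cab : ∀ x : Equiv.Perm (Fin n), x * b * a = x * a * b := fun x => by
    rw [mul_assoc, ← hab, mul_assoc]
  have ia : a⁻¹ = a := inv_eq_of_mul_eq_one_left ha
  have ib : b⁻¹ = b := inv_eq_of_mul_eq_one_left hb
  have A1 : ∀ x : Equiv.Perm (Fin n), x * b * a * (x * b)⁻¹ = x * a * x⁻¹ := fun x => by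
    rw [mul_inv_rev, ib, cab, ← mul_assoc, cb]
  have A2 : ∀ x : Equiv.Perm (Fin n), x * a * b * (x * a)⁻¹ = x * b * x⁻¹ := fun x => by
    rw [mul_inv_rev, ia, ← cab, ← mul_assoc, ca]
  have A3 : ∀ x : Equiv.Perm (Fin n), x * a * a * (x * a)⁻¹ = x * a * x⁻¹ := fun x => by group
  have A4 : ∀ x : Equiv.Perm (Fin n), x * b * b * (x * b)⁻¹ = x * b * x⁻¹ := fun x => by group
  have sa : ∀ x y : Equiv.Perm (Fin n), y * (x * a * x⁻¹) * (x * a * x⁻¹) = y := fun x y => by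
    have : y * (x * a * x⁻¹) * (x * a * x⁻¹) = y * x * (a * a) * x⁻¹ := by group
    rw [this, ha]; group
  have sb : ∀ x y : Equiv.Perm (Fin n), y * (x * b * x⁻¹) * (x * b * x⁻¹) = y := fun x y => by
    have : y * (x * b * x⁻¹) * (x * b * x⁻¹) = y * x * (b * b) * x⁻¹ := by group
    rw [this, hb]; group
  have sab : ∀ x y : Equiv.Perm (Fin n), y * (x * b * x⁻¹) * (x * a * x⁻¹)
      = y * (x * a * x⁻¹) * (x * b * x⁻¹) := fun x y => by
    have e1 : y * (x * b * x⁻¹) * (x * a * x⁻¹) = y * x * (b * a) * x⁻¹ := by group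
    have e2 : y * (x * a * x⁻¹) * (x * b * x⁻¹) = y * x * (a * b) * x⁻¹ := by group
    rw [e1, e2, hab]
  rcases liftStep_cases _ _ _ _ s1 with ⟨rfl, t1⟩ | ⟨rfl, t1⟩ <;>
  rcases liftStep_cases _ _ _ _ s2 with ⟨rfl, t2⟩ | ⟨rfl, t2⟩ <;>
  rcases liftStep_cases _ _ _ _ s3 with ⟨rfl, t3⟩ | ⟨rfl, t3⟩ <;>
  rcases liftStep_cases _ _ _ _ s4 with ⟨rfl, t4⟩ | ⟨rfl, t4⟩ <;>
  clear s1 s2 s3 s4 <;>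
  (try simp only [A1, A2, A3, A4] at t1 t2 t3 t4 ⊢) <;>
  first
  | exact absurd t1 t3
  | exact absurd t3 t1
  | exact absurd t2 t4
  | exact absurd t4 t2
  | (refine Prod.ext ?_ ?_ <;> dsimp only <;> (try simp only [← cab, ca, cb, sa, sb]) <;>
      (try rw [← sab (ρ) (π)]) <;> simp only [sa, sb, ca, cb])

/-- Lifting a commuting-relation loop `σ — σs_i — σs_is_j — σs_j — σ` (with `|i−j| ≥ 2`,
all four vertices in the same recoil class) starting at a factorization `(π,ρ)` of `σ`
returns to `(π,ρ)`. -/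
theorem statement17 (n : ℕ) (hn : 0 < n) (σ π ρ : Equiv.Perm (Fin n))
    (I J : Finset (Fin n)) (i j : ℕ) (hi : i + 1 < n) (hj : j + 1 < n)
    (hij : 2 ≤ |(i : ℤ) - (j : ℤ)|)
    (si : Equiv.Perm (Fin n)) (sj : Equiv.Perm (Fin n))
    (hsi : si = Equiv.swap ⟨i, by omega⟩ ⟨i + 1, hi⟩)
    (hsj : sj = Equiv.swap ⟨j, by omega⟩ ⟨j + 1, hj⟩)
    (h1 : recoilSet (σ * si) = recoilSet σ)
    (h2 : recoilSet (σ * si * sj) = recoilSet σ)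
    (h3 : recoilSet (σ * sj) = recoilSet σ)
    (hfac : σ = π * ρ) (hπ : recoilSet π = I) (hρ : recoilSet ρ = J) :
    ∀ p₁ p₂ p₃ p₄ : Equiv.Perm (Fin n) × Equiv.Perm (Fin n),
      LiftStep si (π, ρ) p₁ → LiftStep sj p₁ p₂ → LiftStep si p₂ p₃ →
      LiftStep sj p₃ p₄ → p₄ = (π, ρ) := by
  intro p₁ p₂ p₃ p₄ s1 s2 s3 s4
  refine loop_closed si sj π ρ ?_ ?_ ?_ p₁ p₂ p₃ p₄ s1 s2 s3 s4
  · rw [hsi, Equiv.swap_mul_self]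
  · rw [hsj, Equiv.swap_mul_self]
  · have hd : i + 2 ≤ j ∨ j + 2 ≤ i := by
      rcases le_abs.1 hij with h | h <;> omega
    have : Equiv.Perm.Disjoint si sj := by
      intro x
      rw [hsi, hsj]
      by_cases hx : (x : ℕ) = i ∨ (x : ℕ) = i + 1
      · right
        apply Equiv.swap_apply_of_ne_of_ne <;> (intro h; rw [Fin.ext_iff] at h; dsimp only at h; omega)
      · left
        apply Equiv.swap_apply_of_ne_of_ne <;> (intro h; rw [Fin.ext_iff] at h; dsimp only at h; omega)
    exact this.commute
end
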